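/- There exists a universal constant C > 0 such that for every n ≥ 2 and every convex body K ⊆ ℝⁿ in isotropic position, M*(K) ≤ C·log²(n+1)·√n. -/

import Mathlib

/-!
Let `h` be the support function of `K` and `γ` the standard Gaussian measure. In polar coordinates
`M*(K)` is at most `∫ h dγ / ∫ ‖g‖ dγ` (`Mparam_polar_le`), and the denominator is at least a
multiple of `√n`, so it suffices to show `∫ h dγ ≤ C n log² (n + 1)` (`gauss_suppFun_le`).

Choose a measurable `x : ℝⁿ → K` with `⟪g, x g⟫ ≥ h g - 1`. Then `∫ ⟪g, x g⟫ dγ` is the trace of the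
linear map `A u = ∫ ⟪u, x g⟫ g dγ` (`crossMap`), the first Hermite coefficient of `x`, and is bounded
by the sum of the singular values of `A`. These are bounded one at a time.

*The linear part as a difference of `K`-valued maps.* The Ornstein-Uhlenbeck averages of `x` with
correlation `t` take values in `K` and multiply the `m`-th chaos by `t ^ m`. A discrete Fejér kernel
yields `t j ∈ [-1/2, 1/2]` and signed weights `ρ j` of total mass `O(M)` with
`∑ ρ j (t j) ^ m = δ_{m,1}` for `m ≤ M` (`exists_weights`). For `M ≈ log n` the combination of
averages equals the linear part of `x` up to an `L²` error at most one in every unit direction, since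
`K` has diameter `O(n)` and the coefficients with `m > M` are `O(M 2 ^ (-M))`. The chaos
decomposition itself is replaced by computations on the exponentials `expo a`, which are total in
`L²(γ)` (`ouErr_le`). Splitting `ρ` into positive and negative parts produces maps `y₁, y₂` into `K`
and `a = O(M)` with `⟪A u, g⟫ ≈ a ⟪u, y₁ g - y₂ g⟫` (`exists_pair`).

*Comparison with the isotropic measure.* Let `u i`, `i ∈ s`, be `k` right singular vectors of `A`
with singular values at least `σ`. Contracting `K` towards a point by a factor `1 - ε` with
`ε = k / (2 n)` costs a Jacobian `(1 - ε) ^ n ≥ exp (-k)`. So, for independent uniform `X₁, X₂` in `K`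
and every `g`, the projection of `X₂ - X₁` to the span of the `u i` lies near `ε (y₁ g - y₂ g)`, hence
near `(ε / a) (⟪A (u i), g⟫)_i`, with weight at least `exp (-O(k))`; isotropicity bounds the
fluctuations by `1` per direction. Averaging over `g` first, the Gaussian vector
`(ε / a) (⟪A (u i), g⟫)_i` has a density at most `(a / (ε σ)) ^ k`. Together these give
`σ ≤ C n a / k` (`level_bound`), so the `k`-th singular value is at most `C n log n / k`, and summing
over `k` gives the second logarithm.
-/

open MeasureTheory Real Pointwise RealInnerProductSpace
open scoped ENNReal

noncomputable section

/-- A convex body: a compact convex set with non-empty interior. -/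
def IsConvexBody {n : ℕ} (K : Set (EuclideanSpace ℝ (Fin n))) : Prop :=
  IsCompact K ∧ Convex ℝ K ∧ (interior K).Nonempty

/-- The uniform probability measure on a set `K`. -/
def unifOn {n : ℕ} (K : Set (EuclideanSpace ℝ (Fin n))) : Measure (EuclideanSpace ℝ (Fin n)) :=
  (volume K)⁻¹ • volume.restrict K

/-- A probability measure `μ` on `ℝⁿ` is isotropic: its barycenter vanishes and its
covariance matrix is the identity. -/
def IsIsotropicMeasure {n : ℕ} (μ : Measure (EuclideanSpace ℝ (Fin n))) : Prop :=
  (∀ i, ∫ x, x i ∂μ = 0) ∧ ∀ i j, ∫ x, x i * x j ∂μ = if i = j then 1 else 0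

/-- A convex body is in isotropic position if the uniform probability measure on it
is isotropic. -/
def IsIsotropicBody {n : ℕ} (K : Set (EuclideanSpace ℝ (Fin n))) : Prop :=
  IsIsotropicMeasure (unifOn K)

/-- A log-concave density: nonnegative, and multiplicatively convex. This is equivalent to:
`{p > 0}` is convex and `log (1/p)` is convex on it. -/
def IsLogConcaveDensity {n : ℕ} (p : EuclideanSpace ℝ (Fin n) → ℝ) : Prop :=
  (∀ x, 0 ≤ p x) ∧ ∀ x y : EuclideanSpace ℝ (Fin n), ∀ t : ℝ, 0 ≤ t → t ≤ 1 →
    p x ^ t * p y ^ (1 - t) ≤ p (t • x + (1 - t) • y)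

/-- A measure on `ℝⁿ` is log-concave if it has a log-concave density w.r.t. Lebesgue. -/
def IsLogConcaveMeasure {n : ℕ} (μ : Measure (EuclideanSpace ℝ (Fin n))) : Prop :=
  ∃ p : EuclideanSpace ℝ (Fin n) → ℝ, Measurable p ∧ IsLogConcaveDensity p ∧
    μ = volume.withDensity fun x => ENNReal.ofReal (p x)

/-- The standard Gaussian probability measure on `ℝⁿ`. -/
def stdGaussian (n : ℕ) : Measure (EuclideanSpace ℝ (Fin n)) :=
  volume.withDensity fun x => ENNReal.ofReal ((2 * π) ^ (-(n : ℝ) / 2) * Real.exp (-‖x‖ ^ 2 / 2))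

/-- The Poincaré constant of a measure: the least `A ≥ 0` such that
`Var f ≤ A ⬝ E |∇ f|²` for all locally Lipschitz `f`. -/
def poincareConst {n : ℕ} (μ : Measure (EuclideanSpace ℝ (Fin n))) : ℝ :=
  sInf {A : ℝ | 0 ≤ A ∧ ∀ f : EuclideanSpace ℝ (Fin n) → ℝ, LocallyLipschitz f →
    ∫ x, (f x - ∫ y, f y ∂μ) ^ 2 ∂μ ≤ A * ∫ x, ‖gradient f x‖ ^ 2 ∂μ}

/-- The KLS constant `ψₙ`. -/
def KLSConst (n : ℕ) : ℝ :=
  sSup {s : ℝ | ∃ μ : Measure (EuclideanSpace ℝ (Fin n)), IsProbabilityMeasure μ ∧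
    IsLogConcaveMeasure μ ∧ IsIsotropicMeasure μ ∧ s = Real.sqrt (poincareConst μ)}

/-- The Hilbert-Schmidt norm of a matrix. -/
def hsNorm {n : ℕ} (M : Matrix (Fin n) (Fin n) ℝ) : ℝ :=
  Real.sqrt (∑ i, ∑ j, (M i j) ^ 2)

/-- The coefficient `κₙ`, the supremum of `‖E [X₁ (X ⊗ X)]‖_HS` over all isotropic
log-concave random vectors `X` in `ℝⁿ`. -/
def kappaConst (n : ℕ) : ℝ :=
  sSup {s : ℝ | ∃ μ : Measure (EuclideanSpace ℝ (Fin n)), IsProbabilityMeasure μ ∧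
    IsLogConcaveMeasure μ ∧ IsIsotropicMeasure μ ∧ ∃ h : 0 < n,
    s = hsNorm (Matrix.of fun i j => ∫ x, x ⟨0, h⟩ * (x i * x j) ∂μ)}

/-- A gauge function on `ℝⁿ`: non-negative, convex, positively homogeneous. -/
def IsGauge {n : ℕ} (f : EuclideanSpace ℝ (Fin n) → ℝ) : Prop :=
  (∀ x, 0 ≤ f x) ∧ ConvexOn ℝ Set.univ f ∧
    ∀ (c : ℝ), 0 ≤ c → ∀ x, f (c • x) = c * f x

/-- `M(K)`: the mean of the Minkowski functional of `K` over the unit sphere, w.r.t. the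
uniform probability measure on the sphere. -/
def Mparam (n : ℕ) (K : Set (EuclideanSpace ℝ (Fin n))) : ℝ :=
  ∫ x : Metric.sphere (0 : EuclideanSpace ℝ (Fin n)) 1,
    gauge K x ∂(((volume : Measure (EuclideanSpace ℝ (Fin n))).toSphere Set.univ)⁻¹ •
      (volume : Measure (EuclideanSpace ℝ (Fin n))).toSphere)

/-- The polar body. -/
def polarBody {n : ℕ} (K : Set (EuclideanSpace ℝ (Fin n))) : Set (EuclideanSpace ℝ (Fin n)) :=
  {x | ∀ y ∈ K, ⟪x, y⟫ ≤ 1}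

/-- `R(K)`: the maximal Euclidean norm of a point of `K`. -/
def Rparam {n : ℕ} (K : Set (EuclideanSpace ℝ (Fin n))) : ℝ :=
  sSup {r : ℝ | ∃ x ∈ K, r = ‖x‖}

/-- The operator norm `‖A : K → T‖ = sup_{x ≠ 0} ‖Ax‖_T / ‖x‖_K` (Minkowski functionals). -/
def mapNorm {n : ℕ} (K T : Set (EuclideanSpace ℝ (Fin n)))
    (A : Matrix (Fin n) (Fin n) ℝ) : ℝ :=
  sSup {r : ℝ | ∃ x : EuclideanSpace ℝ (Fin n), x ≠ 0 ∧
    r = gauge T (Matrix.toEuclideanLin A x) / gauge K x}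

/-- The ℓ₂ operator norm of a matrix. -/
def matOpNorm {n : ℕ} (M : Matrix (Fin n) (Fin n) ℝ) : ℝ :=
  ‖LinearMap.toContinuousLinearMap (Matrix.toEuclideanLin M)‖

/-! ### Signed quadrature weights extracting the linear coefficient -/

lemma sum_zpow_root {N : ℕ} {ζ : ℂ} (hζ : IsPrimitiveRoot ζ N) (l : ℤ) :
    ∑ j : Fin N, (ζ ^ (j : ℕ)) ^ l = if (N : ℤ) ∣ l then (N : ℂ) else 0 := by
  have h1 : ∀ j : Fin N, (ζ ^ (j : ℕ)) ^ l = (ζ ^ l) ^ (j : ℕ) := fun j => by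
    rw [← zpow_natCast, ← zpow_natCast, ← zpow_mul, ← zpow_mul, mul_comm]
  simp_rw [h1]
  rw [Fin.sum_univ_eq_sum_range (fun j => (ζ ^ l) ^ j) N]
  split_ifs with h
  · rw [(hζ.zpow_eq_one_iff_dvd l).2 h]; simp
  · have h2 : ζ ^ l ≠ 1 := fun h' => h ((hζ.zpow_eq_one_iff_dvd l).1 h')
    rw [geom_sum_eq h2, ← zpow_natCast, ← zpow_mul, mul_comm, zpow_mul, zpow_natCast, hζ.pow_eq_one]
    simp

/-- A discrete Fejér-type kernel: real weights on the `4M`-th roots of unity, of total mass at most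
`2M`, which integrate `z ^ l` to `i l`, that is, differentiate trigonometric polynomials of degree
at most `M` at angle `0`. -/
lemma exists_trig_weights (M : ℕ) (hM : 1 ≤ M) :
    ∃ (θ r : Fin (4 * M) → ℝ), ∑ j, |r j| ≤ 2 * M ∧
      (∑ j, (r j : ℂ) = 0) ∧
      ∀ l : ℤ, -M ≤ l → l < M → ∑ j, (r j : ℂ) *
        (Complex.exp (θ j * Complex.I) ^ (l + 1) - Complex.exp (θ j * Complex.I) ^ l)
          = Complex.I := by
  set N : ℕ := 4 * M with hN
  have hN0 : 0 < N := by omega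
  have hNc : (N : ℂ) ≠ 0 := by exact_mod_cast hN0.ne'
  set ζ : ℂ := Complex.exp (2 * π * Complex.I / N) with hζd
  have hζ : IsPrimitiveRoot ζ N := Complex.isPrimitiveRoot_exp N hN0.ne'
  let θ : Fin N → ℝ := fun j => 2 * π * j / N
  let z : Fin N → ℂ := fun j => ζ ^ (j : ℕ)
  have hz : ∀ j, Complex.exp (θ j * Complex.I) = z j := fun j => by
    simp only [z, θ, hζd]
    rw [← Complex.exp_nat_mul]
    congr 1; push_cast; ring
  have hz0 : ∀ j, z j ≠ 0 := fun j => by rw [← hz]; exact Complex.exp_ne_zero _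
  have hconj : ∀ j, (starRingEnd ℂ) (z j) = (z j)⁻¹ := fun j => by
    rw [← hz, ← Complex.exp_conj, ← Complex.exp_neg]; congr 1; simp
  let S : Fin N → ℂ := fun j => ∑ k ∈ Finset.range M, z j ^ k
  let S' : Fin N → ℂ := fun j => ∑ k ∈ Finset.range M, z j ^ (-(k : ℤ))
  have hSS : ∀ j, ((‖S j‖ ^ 2 : ℝ) : ℂ) = S j * S' j := fun j => by
    have : S' j = (starRingEnd ℂ) (S j) := by
      simp only [S, S', map_sum, map_pow, hconj, inv_pow, zpow_neg, zpow_natCast]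
    rw [this, Complex.mul_conj, Complex.normSq_eq_norm_sq]
  have orth : ∀ l : ℤ, ∑ j, z j ^ l = if (N : ℤ) ∣ l then (N : ℂ) else 0 := sum_zpow_root hζ
  let r : Fin N → ℝ := fun j => (2 / N) * Real.sin (M * θ j) * ‖S j‖ ^ 2
  have hr : ∀ j, (r j : ℂ) = (N : ℂ)⁻¹ * (-Complex.I) * (z j ^ (M : ℤ) - z j ^ (-(M : ℤ))) * (S j * S' j) := by
    intro j
    have hs : ((Real.sin (M * θ j) : ℝ) : ℂ) = (z j ^ (M : ℤ) - z j ^ (-(M : ℤ))) * (-Complex.I) / 2 := by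
      rw [Complex.ofReal_sin, Complex.sin, zpow_neg, zpow_natCast, ← hz, ← Complex.exp_nat_mul,
        ← Complex.exp_neg]
      push_cast
      rw [show (-(↑M * (θ j : ℂ)) * Complex.I) = -(↑M * (↑(θ j) * Complex.I)) by ring,
        show ((↑M * (θ j : ℂ)) * Complex.I) = (↑M * (↑(θ j) * Complex.I)) by ring]
      ring
    simp only [r]
    rw [Complex.ofReal_mul, hSS, Complex.ofReal_mul, hs]
    push_cast
    field_simp
  refine ⟨θ, r, ?_, ?_, ?_⟩
  · have hpars : ∑ j, ‖S j‖ ^ 2 = (N : ℝ) * M := by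
      have : ((∑ j, ‖S j‖ ^ 2 : ℝ) : ℂ) = (N : ℂ) * M := by
        rw [Complex.ofReal_sum]
        simp_rw [hSS, S, S', Finset.sum_mul_sum]
        rw [Finset.sum_comm]
        have : ∀ k ∈ Finset.range M, ∑ j, ∑ k' ∈ Finset.range M, z j ^ k * z j ^ (-(k' : ℤ)) = (N : ℂ) := by
          intro k hk
          rw [Finset.sum_comm, Finset.sum_eq_single k]
          · have := orth 0
            simp only [zpow_zero, dvd_zero, if_true] at this
            rw [← this]
            refine Finset.sum_congr rfl fun j _ => ?_
            rw [zpow_neg, zpow_natCast, mul_inv_cancel₀ (pow_ne_zero _ (hz0 j))]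
          · intro k' hk' hne
            have h := orth ((k : ℤ) - k')
            rw [if_neg] at h
            · rw [← h]
              refine Finset.sum_congr rfl fun j _ => ?_
              rw [sub_eq_add_neg, zpow_add₀ (hz0 j), zpow_natCast]
            · intro hd
              rw [Finset.mem_range] at hk hk'
              have := Int.eq_zero_of_abs_lt_dvd hd (by rw [abs_lt]; omega)
              omega
          · intro h; exact absurd hk h
        rw [Finset.sum_congr rfl this]; simp [mul_comm]
      exact_mod_cast this
    calc ∑ j, |r j| ≤ ∑ j, (2 / (N : ℝ)) * ‖S j‖ ^ 2 := by
          refine Finset.sum_le_sum fun j _ => ?_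
          simp only [r]
          rw [abs_mul, abs_mul, abs_of_nonneg (by positivity : (0 : ℝ) ≤ 2 / N),
            abs_of_nonneg (by positivity : (0 : ℝ) ≤ ‖S j‖ ^ 2)]
          have := Real.abs_sin_le_one (M * θ j)
          have h2 : 2 / (N : ℝ) * |Real.sin (M * θ j)| ≤ 2 / N * 1 := by gcongr
          nlinarith [sq_nonneg ‖S j‖]
      _ = 2 * M := by
          rw [← Finset.mul_sum, hpars]
          have : (N : ℝ) ≠ 0 := by exact_mod_cast hN0.ne'
          field_simp
  · simp_rw [hr, S, S', Finset.sum_mul_sum, Finset.mul_sum]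
    rw [Finset.sum_comm]
    refine Finset.sum_eq_zero fun k hk => ?_
    rw [Finset.sum_comm]
    refine Finset.sum_eq_zero fun k' hk' => ?_
    rw [Finset.mem_range] at hk hk'
    have h1 := orth (M + k - k')
    have h2 := orth (-M + k - k')
    rw [if_neg] at h1 h2
    · have : ∀ j, (N : ℂ)⁻¹ * (-Complex.I) * (z j ^ (M : ℤ) - z j ^ (-(M : ℤ))) * (z j ^ k * z j ^ (-(k' : ℤ)))
          = (N : ℂ)⁻¹ * (-Complex.I) * (z j ^ ((M : ℤ) + k - k')) - (N : ℂ)⁻¹ * (-Complex.I) * (z j ^ (-(M : ℤ) + k - k')) := by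
        intro j
        rw [sub_eq_add_neg (_ + _), sub_eq_add_neg (_ + _), zpow_add₀ (hz0 j), zpow_add₀ (hz0 j), zpow_add₀ (hz0 j), zpow_add₀ (hz0 j), zpow_natCast (z j) k]
        ring
      simp_rw [this, Finset.sum_sub_distrib, ← Finset.mul_sum, h1, h2]
      simp
    · intro hd
      have := Int.eq_zero_of_abs_lt_dvd hd (by rw [abs_lt]; omega)
      omega
    · intro hd
      have := Int.eq_zero_of_abs_lt_dvd hd (by rw [abs_lt]; omega)
      omega
  · intro l hl1 hl2
    simp_rw [hz]
    have key : ∀ j, (r j : ℂ) * (z j ^ (l + 1) - z j ^ l) = (N : ℂ)⁻¹ * (-Complex.I) *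
        ∑ k ∈ Finset.range M, (z j ^ (l - k + 2 * M) - z j ^ (l - k + M) - z j ^ (l - k) + z j ^ (l - k - M)) := by
      intro j
      have htel : S j * (z j - 1) = z j ^ (M : ℤ) - 1 := by
        rw [zpow_natCast]; exact geom_sum_mul (z j) M
      have e1 : z j ^ (l + 1) - z j ^ l = z j ^ l * (z j - 1) := by
        rw [zpow_add_one₀ (hz0 j)]; ring
      have e2 : z j ^ (M : ℤ) * z j ^ (-(M : ℤ)) = 1 := by
        rw [← zpow_add₀ (hz0 j)]; simp
      rw [hr, e1]
      calc _ = (N : ℂ)⁻¹ * (-Complex.I) * ((z j ^ (M : ℤ) - z j ^ (-(M : ℤ))) * (S j * (z j - 1)) * z j ^ l * S' j) := by ring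
        _ = _ := by
          congr 1
          rw [htel]
          simp only [S']
          rw [Finset.mul_sum]
          refine Finset.sum_congr rfl fun k _ => ?_
          have f1 : z j ^ (l - k) = z j ^ l * z j ^ (-(k : ℤ)) := by
            rw [← zpow_add₀ (hz0 j)]; rfl
          have f2 : z j ^ (l - k + 2 * M) = z j ^ (l - k) * (z j ^ (M : ℤ) * z j ^ (M : ℤ)) := by
            rw [← zpow_add₀ (hz0 j), ← zpow_add₀ (hz0 j)]; congr 1; ring
          have f3 : z j ^ (l - k + M) = z j ^ (l - k) * z j ^ (M : ℤ) := zpow_add₀ (hz0 j) _ _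
          have f4 : z j ^ (l - k - M) = z j ^ (l - k) * z j ^ (-(M : ℤ)) := by
            rw [← zpow_add₀ (hz0 j)]; rfl
          rw [f2, f3, f4, f1]
          linear_combination (-1 : ℂ) * z j ^ l * z j ^ (-(k : ℤ)) * e2
    simp_rw [key, ← Finset.mul_sum]
    rw [Finset.sum_comm]
    have inner : ∀ k ∈ Finset.range M, ∑ j, (z j ^ (l - k + 2 * M) - z j ^ (l - k + M) - z j ^ (l - k) + z j ^ (l - k - M))
        = (-(if (k : ℤ) = (if l < 0 then l + M else l) then (N : ℂ) else 0)) := by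
      intro k hk
      rw [Finset.mem_range] at hk
      rw [Finset.sum_add_distrib, Finset.sum_sub_distrib, Finset.sum_sub_distrib, orth, orth, orth, orth]
      have nd : ∀ a : ℤ, |a| < N → ((N : ℤ) ∣ a ↔ a = 0) := fun a ha =>
        ⟨fun h => Int.eq_zero_of_abs_lt_dvd h ha, fun h => h ▸ dvd_zero _⟩
      simp only [nd (l - k + 2 * M) (by rw [abs_lt]; omega), nd (l - k + M) (by rw [abs_lt]; omega),
        nd (l - k) (by rw [abs_lt]; omega), nd (l - k - M) (by rw [abs_lt]; omega)]
      rw [if_neg (by omega : ¬ (l - k + 2 * M = 0)), if_neg (by omega : ¬ (l - k - M = 0))]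
      split_ifs <;> first | omega | simp
    rw [Finset.sum_congr rfl inner, Finset.sum_neg_distrib]
    obtain ⟨k0, hk0⟩ : ∃ k0 : ℕ, (k0 : ℤ) = if l < 0 then l + M else l := by
      refine ⟨(if l < 0 then l + M else l).toNat, ?_⟩
      split_ifs <;> omega
    rw [← hk0]
    have hk0M : k0 < M := by split_ifs at hk0 <;> omega
    simp only [Nat.cast_inj]
    rw [Finset.sum_ite_eq' , if_pos (Finset.mem_range.2 hk0M)]
    field_simp

/-- Finite signed measures on `[-1/2, 1/2]` of total mass `O(M)` that annihilate the monomials of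
degree at most `M` other than `t`, and are normalised on `t`. -/
lemma exists_weights (M : ℕ) (hM : 1 ≤ M) :
    ∃ (N : ℕ) (t ρ : Fin N → ℝ), (∀ j, |t j| ≤ 1 / 2) ∧
      (∀ m ≤ M, ∑ j, ρ j * t j ^ m = if m = 1 then 1 else 0) ∧ ∑ j, |ρ j| ≤ 4 * M := by
  obtain ⟨θ, r, hr, hr0, hrl⟩ := exists_trig_weights M hM
  refine ⟨4 * M, fun j => Real.sin (θ j) / 2, fun j => 2 * r j, ?_, ?_, ?_⟩
  · intro j
    rw [abs_div, abs_two]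
    have := Real.abs_sin_le_one (θ j)
    linarith
  · set z : Fin (4 * M) → ℂ := fun j => Complex.exp (θ j * Complex.I) with hz
    have hz0 : ∀ j, z j ≠ 0 := fun j => Complex.exp_ne_zero _
    -- `z - z⁻¹ = 2 i sin θ` acts on `l ↦ ∑ r z ^ l` as a difference operator
    have step1 : ∀ l : ℤ, -M < l → l < M → ∑ j, (r j : ℂ) * (z j ^ l * (z j - (z j)⁻¹)) = 2 * Complex.I := by
      intro l h1 h2
      have a := hrl l (by omega) h2
      have b := hrl (l - 1) (by omega) (by omega)
      refine Eq.trans ?_ ((congrArg₂ (· + ·) a b).trans (two_mul _).symm)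
      rw [← Finset.sum_add_distrib]
      refine Finset.sum_congr rfl fun j _ => ?_
      change _ = (r j : ℂ) * (z j ^ (l + 1) - z j ^ l) + (r j : ℂ) * (z j ^ (l - 1 + 1) - z j ^ (l - 1))
      rw [sub_add_cancel, zpow_add_one₀ (hz0 j), zpow_sub_one₀ (hz0 j)]
      ring
    have step2 : ∀ m : ℕ, ∀ l : ℤ, |l| + (m + 2) ≤ M → ∑ j, (r j : ℂ) * (z j ^ l * (z j - (z j)⁻¹) ^ (m + 2)) = 0 := by
      intro m
      induction m with
      | zero =>
        intro l hl
        rw [show l = l from rfl] at hl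
        have h3 := abs_le.1 (show |l| ≤ M - 2 by push_cast at hl; omega)
        have a := step1 (l + 1) (by omega) (by omega)
        have b := step1 (l - 1) (by omega) (by omega)
        rw [← sub_eq_zero.2 (a.trans b.symm), ← Finset.sum_sub_distrib]
        refine Finset.sum_congr rfl fun j _ => ?_
        rw [zpow_add_one₀ (hz0 j), zpow_sub_one₀ (hz0 j)]
        ring
      | succ m ih =>
        intro l hl
        have h3 := abs_le.1 (show |l| ≤ M - m - 3 by push_cast at hl; omega)
        have a := ih (l + 1) (by
          have : |l + 1| ≤ M - m - 2 := abs_le.2 ⟨by omega, by omega⟩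
          omega)
        have b := ih (l - 1) (by
          have : |l - 1| ≤ M - m - 2 := abs_le.2 ⟨by omega, by omega⟩
          omega)
        rw [← sub_eq_zero.2 (a.trans b.symm), ← Finset.sum_sub_distrib]
        refine Finset.sum_congr rfl fun j _ => ?_
        rw [zpow_add_one₀ (hz0 j), zpow_sub_one₀ (hz0 j)]
        ring
    have hsin : ∀ j, ((Real.sin (θ j) : ℝ) : ℂ) = (z j - (z j)⁻¹) * (-Complex.I / 2) := by
      intro j
      rw [Complex.ofReal_sin, Complex.sin, hz]
      simp only
      rw [← Complex.exp_neg, neg_mul]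
      ring
    intro m hm
    have goal : ((∑ j, 2 * r j * (Real.sin (θ j) / 2) ^ m : ℝ) : ℂ) = if m = 1 then 1 else 0 := by
      push_cast
      have e : ∀ j, 2 * (r j : ℂ) * ((Complex.sin (θ j)) / 2) ^ m
          = 2 * (-Complex.I / 4) ^ m * ((r j : ℂ) * (z j ^ (0 : ℤ) * (z j - (z j)⁻¹) ^ m)) := by
        intro j
        rw [← Complex.ofReal_sin, hsin j, zpow_zero, show (z j - (z j)⁻¹) * (-Complex.I / 2) / 2 = (-Complex.I / 4) * (z j - (z j)⁻¹) by ring, mul_pow]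
        ring
      simp_rw [e, ← Finset.mul_sum]
      match m with
      | 0 => simp [hr0]
      | 1 =>
        have := step1 0 (by omega) (by omega)
        simp only [pow_one]
        rw [this]
        simp only [if_true]
        linear_combination (-1 : ℂ) * Complex.I_sq
      | (m + 2) =>
        rw [step2 m 0 (by simp; omega)]
        simp
    have : ((∑ j, 2 * r j * (Real.sin (θ j) / 2) ^ m : ℝ) : ℂ) = ((if m = 1 then 1 else 0 : ℝ) : ℂ) := by
      rw [goal]; split_ifs <;> simp
    exact_mod_cast this
  · simp_rw [abs_mul, abs_two]
    rw [← Finset.mul_sum]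
    linarith

/-! ### Gaussian integrals of linear and exponential functions -/

section GaussianBasics

set_option linter.unusedSectionVars false

variable {E : Type*} [NormedAddCommGroup E] [InnerProductSpace ℝ E] [FiniteDimensional ℝ E]
  [MeasurableSpace E] [BorelSpace E]

local notation "γ" => ProbabilityTheory.stdGaussian

lemma gauss_map_inner (a : E) :
    (γ E).map (fun x => ⟪a, x⟫) = ProbabilityTheory.gaussianReal 0 (‖a‖ ^ 2).toNNReal := by
  have h := ProbabilityTheory.IsGaussian.map_eq_gaussianReal (μ := γ E) (innerSL ℝ a)
  rw [ProbabilityTheory.variance_dual_stdGaussian, ProbabilityTheory.integral_strongDual_stdGaussian,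
    innerSL_apply_norm] at h
  exact h

lemma gauss_integrable_exp_inner (a : E) : Integrable (fun x => exp ⟪a, x⟫) (γ E) := by
  have h := ProbabilityTheory.integrable_exp_mul_gaussianReal (μ := 0) (v := (‖a‖ ^ 2).toNNReal) 1
  rw [← gauss_map_inner a, integrable_map_measure (by fun_prop) (by fun_prop)] at h
  simpa [Function.comp_def] using h

lemma gauss_integral_exp_inner (a : E) : ∫ x, exp ⟪a, x⟫ ∂(γ E) = exp (‖a‖ ^ 2 / 2) := by
  have h := ProbabilityTheory.mgf_gaussianReal (gauss_map_inner a) 1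
  rw [ProbabilityTheory.mgf] at h
  simpa using h

lemma gauss_memLp_inner (a : E) : MemLp (fun x => ⟪a, x⟫) 2 (γ E) :=
  ProbabilityTheory.IsGaussian.memLp_dual (γ E) (innerSL ℝ a) 2 (by simp)

lemma gauss_integral_inner_mul_inner (a b : E) :
    ∫ x, ⟪a, x⟫ * ⟪b, x⟫ ∂(γ E) = ⟪a, b⟫ := by
  have h := congrArg (fun B => B a b) (ProbabilityTheory.covarianceBilin_stdGaussian (E := E))
  rw [ProbabilityTheory.covarianceBilin_apply ProbabilityTheory.IsGaussian.memLp_two_id] at h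
  simp at h
  exact h

/-- The exponential function `exp (⟪a, x⟫ - |a|² / 2)`, normalised to have Gaussian mean one. -/
def expo (a x : E) : ℝ := exp (⟪a, x⟫ - ‖a‖ ^ 2 / 2)

lemma expo_eq (a x : E) : expo a x = exp (-(‖a‖ ^ 2 / 2)) * exp ⟪a, x⟫ := by
  rw [expo, ← exp_add]; congr 1; ring

lemma expo_mul_expo (a b x : E) : expo a x * expo b x = exp ⟪a, b⟫ * expo (a + b) x := by
  simp only [expo, ← exp_add]
  congr 1
  rw [inner_add_left, @norm_add_sq_real]
  ring

@[fun_prop]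
lemma continuous_expo (a : E) : Continuous (expo a) := by
  unfold expo; fun_prop

lemma integrable_expo (a : E) : Integrable (expo a) (γ E) := by
  have : expo a = fun x => exp (-(‖a‖ ^ 2 / 2)) * exp ⟪a, x⟫ := funext (expo_eq a)
  rw [this]
  exact (gauss_integrable_exp_inner a).const_mul _

lemma integral_expo (a : E) : ∫ x, expo a x ∂(γ E) = 1 := by
  simp_rw [expo_eq]
  rw [integral_const_mul, gauss_integral_exp_inner, ← exp_add]; simp

lemma memLp_expo (a : E) : MemLp (expo a) 2 (γ E) := by
  rw [memLp_two_iff_integrable_sq (by fun_prop)]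
  have : (fun x => expo a x ^ 2) = fun x => exp ⟪a, a⟫ * expo (a + a) x := by
    funext x; rw [sq, expo_mul_expo]
  rw [this]
  exact (integrable_expo _).const_mul _

lemma integral_expo_mul_expo (a b : E) : ∫ x, expo a x * expo b x ∂(γ E) = exp ⟪a, b⟫ := by
  simp_rw [expo_mul_expo]
  rw [integral_const_mul, integral_expo, mul_one]

lemma integral_expo_mul_inner (a b : E) : ∫ x, expo a x * ⟪b, x⟫ ∂(γ E) = ⟪a, b⟫ := by
  -- differentiate the moment generating function of `⟪b, ·⟫` under the measure with density `expo a`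
  let ν : Measure E := (γ E).withDensity (fun x => ENNReal.ofReal (expo a x))
  have hpos : ∀ x, 0 ≤ expo a x := fun x => (exp_pos _).le
  have hint : ∀ f : E → ℝ, ∫ x, f x ∂ν = ∫ x, expo a x * f x ∂(γ E) := by
    intro f
    rw [integral_withDensity_eq_integral_toReal_smul (by fun_prop) (by simp)]
    simp [ENNReal.toReal_ofReal, hpos]
  have hint2 : ∀ f : E → ℝ, Integrable f ν ↔ Integrable (fun x => expo a x * f x) (γ E) := by
    intro f
    rw [integrable_withDensity_iff_integrable_smul' (by fun_prop) (by simp)]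
    simp [ENNReal.toReal_ofReal, hpos]
  have he : ∀ s : ℝ, ∀ x : E, expo a x * exp (s * ⟪b, x⟫) =
      exp (s * ⟪a, b⟫ + s ^ 2 * ‖b‖ ^ 2 / 2) * expo (a + s • b) x := by
    intro s x
    simp only [expo, ← exp_add]
    congr 1
    rw [inner_add_left, @norm_add_sq_real, real_inner_smul_left, real_inner_smul_right, norm_smul, mul_pow,
      Real.norm_eq_abs, sq_abs]
    ring
  have hm : ProbabilityTheory.mgf (fun x => ⟪b, x⟫) ν = fun s => exp (s * ⟪a, b⟫ + s ^ 2 * ‖b‖ ^ 2 / 2) := by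
    funext s
    rw [ProbabilityTheory.mgf, hint]
    simp_rw [he]
    rw [integral_const_mul, integral_expo, mul_one]
  have hset : ProbabilityTheory.integrableExpSet (fun x => ⟪b, x⟫) ν = Set.univ := by
    ext s
    simp only [ProbabilityTheory.integrableExpSet, Set.mem_ofPred_eq, Set.mem_univ, iff_true]
    rw [hint2]
    simp_rw [he]
    exact (integrable_expo _).const_mul _
  have h1 := ProbabilityTheory.deriv_mgf_zero (X := fun x => ⟪b, x⟫) (μ := ν) (by rw [hset]; simp)
  rw [← hint, ← h1, hm]
  have h2 : HasDerivAt (fun s : ℝ => exp (s * ⟪a, b⟫ + s ^ 2 * ‖b‖ ^ 2 / 2))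
      (exp (0 * ⟪a, b⟫ + 0 ^ 2 * ‖b‖ ^ 2 / 2) * (1 * ⟪a, b⟫ + (↑2 * (0:ℝ) ^ (2 - 1) * 1) * ‖b‖ ^ 2 / 2)) 0 := by
    refine HasDerivAt.exp ?_
    refine HasDerivAt.add ((hasDerivAt_id _).mul_const _) ?_
    exact (((hasDerivAt_id (0:ℝ)).pow 2).mul_const _).div_const _
  rw [h2.deriv]
  simp

/-- Gaussian rotation invariance in the form behind the Ornstein-Uhlenbeck semigroup. -/
lemma gauss_rotation {t s : ℝ} (hts : t ^ 2 + s ^ 2 = 1) :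
    MeasurePreserving (fun p : E × E => t • p.1 + s • p.2) ((γ E).prod (γ E)) (γ E) := by
  refine ⟨by fun_prop, ?_⟩
  refine Measure.ext_of_charFun (funext fun u => ?_)
  rw [charFun_apply, integral_map (by fun_prop) (by fun_prop)]
  have : ∀ p : E × E, Complex.exp (⟪t • p.1 + s • p.2, u⟫ * Complex.I)
      = Complex.exp (⟪p.1, t • u⟫ * Complex.I) * Complex.exp (⟪p.2, s • u⟫ * Complex.I) := by
    intro p
    rw [← Complex.exp_add, inner_add_left, real_inner_smul_left, real_inner_smul_left,
      real_inner_smul_right, real_inner_smul_right]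
    push_cast; congr 1; ring
  simp_rw [this]
  rw [integral_prod_mul (μ := γ E) (ν := γ E) (fun x => Complex.exp (⟪x, t • u⟫ * Complex.I))
    (fun x => Complex.exp (⟪x, s • u⟫ * Complex.I))]
  rw [← charFun_apply, ← charFun_apply]
  simp only [ProbabilityTheory.charFun_stdGaussian]
  rw [← Complex.exp_add, norm_smul, norm_smul]
  congr 1
  simp only [Real.norm_eq_abs]
  have h1 : ((|t| : ℝ) : ℂ) ^ 2 = (t:ℂ) ^ 2 := by rw [← Complex.ofReal_pow, sq_abs]; simp
  have h2 : ((|s| : ℝ) : ℂ) ^ 2 = (s:ℂ) ^ 2 := by rw [← Complex.ofReal_pow, sq_abs]; simp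
  have h3 : (t:ℂ) ^ 2 + (s:ℂ) ^ 2 = 1 := by exact_mod_cast hts
  push_cast
  linear_combination (-((‖u‖ : ℂ) ^ 2) / 2) * (h1 + h2 + h3)

end GaussianBasics

/-! ### Totality of exponentials in Gaussian `L²` -/

section Density

set_option linter.unusedSectionVars false

variable {E : Type*} [NormedAddCommGroup E] [InnerProductSpace ℝ E] [FiniteDimensional ℝ E]
  [MeasurableSpace E] [BorelSpace E]

local notation "γ" => ProbabilityTheory.stdGaussian

/-- Exponentials are total in `L²(γ)`: the positive and negative part of a function orthogonal to
all of them are densities of measures with the same Laplace transform. -/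
lemma ae_eq_zero_of_expo_orthogonal {f : E → ℝ} (hf : MemLp f 2 (γ E))
    (h : ∀ a, ∫ x, expo a x * f x ∂(γ E) = 0) : f =ᵐ[γ E] 0 := by
  have hfi : Integrable f (γ E) := hf.integrable (by norm_num)
  have hexp2 : ∀ a : E, MemLp (fun x => exp ⟪a, x⟫) 2 (γ E) := fun a => by
    have : (fun x => exp ⟪a, x⟫) = fun x => exp (‖a‖ ^ 2 / 2) * expo a x := by
      funext x; rw [expo_eq, ← mul_assoc, ← exp_add]; simp
    rw [this]; exact (memLp_expo a).const_mul _
  have hexp : ∀ a : E, ∫ x, exp ⟪a, x⟫ * f x ∂(γ E) = 0 := fun a => by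
    have := h a
    simp_rw [expo_eq, mul_assoc] at this
    rw [integral_const_mul] at this
    exact (mul_eq_zero.1 this).resolve_left (exp_pos _).ne'
  let ν : (E → ℝ) → Measure E := fun f => (γ E).withDensity (fun x => ENNReal.ofReal (f x))
  have hp : MemLp (fun x => max (f x) 0) 2 (γ E) := hf.pos_part
  have hn : MemLp (fun x => max (-f x) 0) 2 (γ E) := hf.neg_part
  have hInt : ∀ g : E → ℝ, AEMeasurable g (γ E) → ∀ φ : E → ℝ, ∫ x, φ x ∂(ν g) = ∫ x, max (g x) 0 * φ x ∂(γ E) := by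
    intro g hg φ
    rw [integral_withDensity_eq_integral_toReal_smul₀ hg.ennreal_ofReal (by simp)]
    simp [ENNReal.toReal_ofReal']
  have hIntble : ∀ g : E → ℝ, AEMeasurable g (γ E) → ∀ φ : E → ℝ, Integrable φ (ν g) ↔ Integrable (fun x => max (g x) 0 * φ x) (γ E) := by
    intro g hg φ
    rw [integrable_withDensity_iff_integrable_smul₀' hg.ennreal_ofReal (by simp)]
    simp [ENNReal.toReal_ofReal']
  have hfm : AEMeasurable f (γ E) := hf.aestronglyMeasurable.aemeasurable
  have hfin1 : IsFiniteMeasure (ν f) := isFiniteMeasure_withDensity_ofReal hfi.2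
  have hfin2 : IsFiniteMeasure (ν (-f)) := isFiniteMeasure_withDensity_ofReal hfi.neg.2
  have hlap : ∀ a : E, ∫ x, exp ⟪a, x⟫ ∂(ν f) = ∫ x, exp ⟪a, x⟫ ∂(ν (-f)) := by
    intro a
    rw [hInt _ hfm, hInt _ hfm.neg, ← sub_eq_zero, ← integral_sub]
    · refine Eq.trans ?_ (hexp a)
      congr 1; funext x
      rw [← sub_mul, mul_comm, Pi.neg_apply]
      congr 1
      rcases le_total (f x) 0 with h | h
      · rw [max_eq_right h, max_eq_left (by linarith)]; ring
      · rw [max_eq_left h, max_eq_right (by linarith)]; ring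
    · exact hp.integrable_mul (hexp2 a)
    · exact hn.integrable_mul (hexp2 a)
  have hzero : ν f = 0 ↔ ν (-f) = 0 := by
    have := hlap 0
    simp only [inner_zero_left, exp_zero, integral_const, smul_eq_mul, mul_one] at this
    rw [← Measure.measure_univ_eq_zero, ← Measure.measure_univ_eq_zero (μ := ν (-f)),
      ← measureReal_eq_zero_iff, ← measureReal_eq_zero_iff (μ := ν (-f)), this]
  have heq : ν f = ν (-f) := by
    refine Measure.ext_of_charFun (funext fun a => ?_)
    have hm : ProbabilityTheory.mgf (fun x => ⟪a, x⟫) (ν f) = ProbabilityTheory.mgf (fun x => ⟪a, x⟫) (ν (-f)) := by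
      funext s
      have := hlap (s • a)
      simp only [real_inner_smul_left] at this
      exact this
    have hset : ProbabilityTheory.integrableExpSet (fun x => ⟪a, x⟫) (ν f) = Set.univ := by
      ext s
      simp only [ProbabilityTheory.integrableExpSet, Set.mem_ofPred_eq, Set.mem_univ, iff_true]
      rw [hIntble _ hfm]
      have := hexp2 (s • a)
      simp only [real_inner_smul_left] at this
      exact hp.integrable_mul this
    have := ProbabilityTheory.eqOn_complexMGF_of_mgf' hm hzero (x := Complex.I) (by
      rw [hset]; simp)
    simp only [ProbabilityTheory.complexMGF] at this
    rw [charFun_apply, charFun_apply]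
    simp_rw [real_inner_comm]
    simp_rw [mul_comm Complex.I] at this
    exact this
  have := (withDensity_eq_iff hfm.ennreal_ofReal hfm.neg.ennreal_ofReal (by
    rw [← setLIntegral_univ, ← withDensity_apply _ MeasurableSet.univ]; exact measure_ne_top (ν f) _)).1 heq
  filter_upwards [this] with x hx
  rcases le_total (f x) 0 with h | h
  · rw [ENNReal.ofReal_of_nonpos h] at hx
    have := ENNReal.ofReal_eq_zero.1 hx.symm
    simp only [Pi.neg_apply, Pi.zero_apply] at *; linarith
  · rw [Pi.neg_apply, ENNReal.ofReal_of_nonpos (by linarith : -f x ≤ 0)] at hx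
    have := ENNReal.ofReal_eq_zero.1 hx
    simp only [Pi.zero_apply] at *; linarith

/-- Linear combinations of exponentials are dense in `L²(γ)`. -/
lemma exists_expo_approx {F : E → ℝ} (hF : MemLp F 2 (γ E)) {δ : ℝ} (hδ : 0 < δ) :
    ∃ (s : Finset E) (α : E → ℝ), ∫ x, (F x - ∑ a ∈ s, α a * expo a x) ^ 2 ∂(γ E) ≤ δ := by
  let v : E → Lp ℝ 2 (γ E) := fun a => (memLp_expo a).toLp
  have htop : (Submodule.span ℝ (Set.range v)).topologicalClosure = ⊤ := by
    rw [Submodule.topologicalClosure_eq_top_iff, Submodule.eq_bot_iff]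
    intro f hf
    have h0 : f =ᵐ[γ E] (0 : E → ℝ) := by
      refine ae_eq_zero_of_expo_orthogonal (Lp.memLp f) fun a => ?_
      have h1 : ⟪v a, f⟫ = 0 := (Submodule.mem_orthogonal _ _).1 hf _ (Submodule.subset_span ⟨a, rfl⟩)
      rw [L2.inner_def] at h1
      rw [← h1]
      refine integral_congr_ae ?_
      filter_upwards [(memLp_expo a).coeFn_toLp] with x hx
      simp [v, hx, mul_comm]
    exact (Lp.eq_zero_iff_ae_eq_zero).2 h0
  have hmem : hF.toLp ∈ closure (Submodule.span ℝ (Set.range v) : Set (Lp ℝ 2 (γ E))) := by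
    rw [← Submodule.topologicalClosure_coe, htop]; trivial
  obtain ⟨φ, hφ, hd⟩ := Metric.mem_closure_iff.1 hmem (√δ) (Real.sqrt_pos.2 hδ)
  obtain ⟨c, rfl⟩ := Finsupp.mem_span_range_iff_exists_finsupp.1 hφ
  refine ⟨c.support, c, ?_⟩
  have hsub : MemLp (fun x => F x - ∑ a ∈ c.support, c a * expo a x) 2 (γ E) :=
    hF.sub (memLp_finsetSum _ fun a _ => (memLp_expo a).const_mul _)
  have e : hF.toLp - c.sum (fun i a => a • v i) = hsub.toLp := by
    refine Lp.ext ?_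
    have h2 : ∀ᵐ x ∂(γ E), ∀ a ∈ c.support, (c a • v a : Lp ℝ 2 (γ E)) x = c a * expo a x := by
      rw [Filter.eventually_all_finset]
      intro a _
      filter_upwards [Lp.coeFn_smul (c a) (v a), (memLp_expo a).coeFn_toLp] with x h1 h2
      rw [h1, Pi.smul_apply, h2, smul_eq_mul]
    have h3 : ((∑ a ∈ c.support, c a • v a : Lp ℝ 2 (γ E)) : E → ℝ) =ᵐ[γ E] ∑ a ∈ c.support, ((c a • v a : Lp ℝ 2 (γ E)) : E → ℝ) :=
      Lp.coeFn_finsetSum _ _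
    filter_upwards [Lp.coeFn_sub (hF.toLp) (c.sum (fun i a => a • v i)), hF.coeFn_toLp, hsub.coeFn_toLp, h2, h3] with x h4 h5 h6 h7 h8
    rw [h4, h6, Pi.sub_apply, h5, Finsupp.sum, h8, Finset.sum_apply, Finset.sum_congr rfl h7]
  rw [dist_eq_norm, e] at hd
  have h9 : ‖hsub.toLp‖ ^ 2 = ∫ x, (F x - ∑ a ∈ c.support, c a * expo a x) ^ 2 ∂(γ E) := by
    rw [← real_inner_self_eq_norm_sq, L2.inner_def]
    refine integral_congr_ae ?_
    filter_upwards [hsub.coeFn_toLp] with x hx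
    rw [hx]; simp [sq]
  rw [← h9]
  have := sq_lt_sq₀ (norm_nonneg _) (Real.sqrt_nonneg _) |>.2 hd
  rw [Real.sq_sqrt hδ.le] at this
  exact this.le

end Density

/-! ### Ornstein-Uhlenbeck operators and the linear chaos -/

section OU

set_option linter.unusedSectionVars false

variable {E : Type*} [NormedAddCommGroup E] [InnerProductSpace ℝ E] [FiniteDimensional ℝ E]
  [MeasurableSpace E] [BorelSpace E]

local notation "γ" => ProbabilityTheory.stdGaussian

/-- The Ornstein-Uhlenbeck (Mehler) operator with correlation `t`. -/
def ou (t : ℝ) (F : E → ℝ) (g : E) : ℝ := ∫ x, F (t • g + √(1 - t ^ 2) • x) ∂(γ E)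

/-- The vector of first Hermite coefficients of `F`. -/
def gvec (F : E → ℝ) : E := ∫ x, F x • x ∂(γ E)

lemma ou_rot {t : ℝ} (ht : |t| ≤ 1) : t ^ 2 + √(1 - t ^ 2) ^ 2 = 1 := by
  rw [Real.sq_sqrt]
  · ring
  · have := (sq_le_one_iff_abs_le_one t).2 ht; linarith

lemma expo_affine (t s : ℝ) (a g x : E) (hts : t ^ 2 + s ^ 2 = 1) :
    expo a (t • g + s • x) = expo (t • a) g * expo (s • a) x := by
  simp only [expo, ← exp_add]
  congr 1
  rw [inner_add_right, real_inner_smul_left, real_inner_smul_left, real_inner_smul_right,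
    real_inner_smul_right, norm_smul, norm_smul, mul_pow, mul_pow, Real.norm_eq_abs, Real.norm_eq_abs,
    sq_abs, sq_abs]
  linear_combination (‖a‖ ^ 2 / 2) * hts

lemma ou_expo {t : ℝ} (ht : |t| ≤ 1) (a g : E) : ou t (expo a) g = expo (t • a) g := by
  simp only [ou, expo_affine _ _ _ _ _ (ou_rot ht)]
  rw [integral_const_mul, integral_expo, mul_one]

lemma ou_sum_expo {t : ℝ} (ht : |t| ≤ 1) (s : Finset E) (α : E → ℝ) (g : E) :
    ou t (fun x => ∑ a ∈ s, α a * expo a x) g = ∑ a ∈ s, α a * expo (t • a) g := by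
  simp only [ou]
  rw [integral_finsetSum]
  · refine Finset.sum_congr rfl fun a _ => ?_
    rw [integral_const_mul]
    congr 1
    exact ou_expo ht a g
  · intro a _
    refine Integrable.const_mul ?_ _
    simp only [expo_affine _ _ _ _ _ (ou_rot ht)]
    exact (integrable_expo _).const_mul _

lemma gauss_memLp_id : MemLp (fun x : E => x) 2 (γ E) := ProbabilityTheory.IsGaussian.memLp_two_id

lemma integrable_smul_id {F : E → ℝ} (hF : MemLp F 2 (γ E)) :
    Integrable (fun x => F x • x) (γ E) := by
  have := MemLp.smul (r := 1) gauss_memLp_id hF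
  exact memLp_one_iff_integrable.1 this

lemma inner_gvec {F : E → ℝ} (hF : MemLp F 2 (γ E)) (g : E) :
    ⟪gvec F, g⟫ = ∫ x, F x * ⟪g, x⟫ ∂(γ E) := by
  rw [real_inner_comm, gvec, ← integral_inner (integrable_smul_id hF)]
  simp_rw [real_inner_smul_right]

lemma gvec_sum_expo (s : Finset E) (α : E → ℝ) (g : E) :
    ⟪gvec (fun x => ∑ a ∈ s, α a * expo a x), g⟫ = ∑ a ∈ s, α a * ⟪a, g⟫ := by
  rw [inner_gvec (memLp_finsetSum _ fun a _ => (memLp_expo a).const_mul _)]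
  simp_rw [Finset.sum_mul, mul_assoc]
  rw [integral_finsetSum]
  · refine Finset.sum_congr rfl fun a _ => ?_
    rw [integral_const_mul, integral_expo_mul_inner]
  · intro a _
    exact ((memLp_expo a).integrable_mul (gauss_memLp_inner g)).const_mul _

lemma gvec_sub {F G : E → ℝ} (hF : MemLp F 2 (γ E)) (hG : MemLp G 2 (γ E)) :
    gvec (fun x => F x - G x) = gvec F - gvec G := by
  simp only [gvec, sub_smul]
  exact integral_sub (integrable_smul_id hF) (integrable_smul_id hG)

/-- Bessel's inequality for the first Hermite coefficients. -/
lemma norm_gvec_sq_le {F : E → ℝ} (hF : MemLp F 2 (γ E)) :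
    ‖gvec F‖ ^ 2 ≤ ∫ x, F x ^ 2 ∂(γ E) := by
  set v := gvec F with hv
  have h1 : ‖v‖ ^ 2 = ∫ x, F x * ⟪v, x⟫ ∂(γ E) := by
    rw [← inner_gvec hF, ← hv, real_inner_self_eq_norm_sq]
  have h2 : ‖v‖ ^ 2 = ∫ x, ⟪v, x⟫ ^ 2 ∂(γ E) := by
    simp_rw [sq]
    rw [gauss_integral_inner_mul_inner, real_inner_self_eq_norm_sq, sq]
  have h3 : ∫ x, 2 * (F x * ⟪v, x⟫) ∂(γ E) ≤ ∫ x, (F x ^ 2 + ⟪v, x⟫ ^ 2) ∂(γ E) := by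
    refine integral_mono ((hF.integrable_mul (gauss_memLp_inner v)).const_mul 2)
      (hF.integrable_sq.add (gauss_memLp_inner v).integrable_sq) fun x => ?_
    simp only
    nlinarith [sq_nonneg (F x - ⟪v, x⟫)]
  rw [integral_const_mul, integral_add hF.integrable_sq (gauss_memLp_inner v).integrable_sq, ← h1, ← h2] at h3
  linarith

lemma ou_memLp_prod {t : ℝ} (ht : |t| ≤ 1) {F : E → ℝ} (hF : MemLp F 2 (γ E)) :
    MemLp (fun p : E × E => F (t • p.1 + √(1 - t ^ 2) • p.2)) 2 ((γ E).prod (γ E)) :=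
  hF.comp_measurePreserving (gauss_rotation (ou_rot ht))

lemma ou_ae_integrable {t : ℝ} (ht : |t| ≤ 1) {F : E → ℝ} (hF : MemLp F 2 (γ E)) :
    ∀ᵐ g ∂(γ E), MemLp (fun x => F (t • g + √(1 - t ^ 2) • x)) 2 (γ E) := by
  have h := ou_memLp_prod ht hF
  have h1 := h.integrable_sq.prod_right_ae
  have h2 := h.aestronglyMeasurable.prodMk_left
  filter_upwards [h1, h2] with g hg1 hg2
  exact (memLp_two_iff_integrable_sq hg2).2 hg1

lemma ou_aestronglyMeasurable {t : ℝ} (ht : |t| ≤ 1) {F : E → ℝ} (hF : MemLp F 2 (γ E)) :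
    AEStronglyMeasurable (ou t F) (γ E) :=
  (ou_memLp_prod ht hF).aestronglyMeasurable.integral_prod_right'

lemma sq_integral_le' {Ω : Type*} [MeasurableSpace Ω] {μ : Measure Ω} [IsProbabilityMeasure μ]
    {f : Ω → ℝ} (hf : MemLp f 2 μ) : (∫ x, f x ∂μ) ^ 2 ≤ ∫ x, f x ^ 2 ∂μ := by
  have := ProbabilityTheory.variance_nonneg f μ
  rw [ProbabilityTheory.variance_eq_sub hf] at this
  simpa using this

/-- The Ornstein-Uhlenbeck operator is a contraction of `L²(γ)`. -/
lemma ou_sq {t : ℝ} (ht : |t| ≤ 1) {F : E → ℝ} (hF : MemLp F 2 (γ E)) :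
    MemLp (ou t F) 2 (γ E) ∧ ∫ g, ou t F g ^ 2 ∂(γ E) ≤ ∫ x, F x ^ 2 ∂(γ E) := by
  have hp := (ou_memLp_prod ht hF).integrable_sq
  have hi := hp.integral_prod_left
  have hle : ∀ᵐ g ∂(γ E), ou t F g ^ 2 ≤ ∫ x, F (t • g + √(1 - t ^ 2) • x) ^ 2 ∂(γ E) := by
    filter_upwards [ou_ae_integrable ht hF] with g hg
    exact sq_integral_le' hg
  have hm := ou_aestronglyMeasurable ht hF
  have hint : Integrable (fun g => ou t F g ^ 2) (γ E) := by
    refine hi.mono' (hm.pow 2) ?_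
    filter_upwards [hle] with g hg
    rw [Real.norm_eq_abs, abs_of_nonneg (sq_nonneg _)]; exact hg
  refine ⟨(memLp_two_iff_integrable_sq hm).2 hint, ?_⟩
  calc ∫ g, ou t F g ^ 2 ∂(γ E) ≤ ∫ g, ∫ x, F (t • g + √(1 - t ^ 2) • x) ^ 2 ∂(γ E) ∂(γ E) :=
        integral_mono_ae hint hi hle
    _ = ∫ p : E × E, F (t • p.1 + √(1 - t ^ 2) • p.2) ^ 2 ∂((γ E).prod (γ E)) := (integral_prod _ hp).symm
    _ = ∫ x, F x ^ 2 ∂(γ E) := by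
        have hmp := gauss_rotation (E := E) (ou_rot ht)
        nth_rw 3 [← hmp.map_eq]
        rw [integral_map hmp.measurable.aemeasurable]
        rw [hmp.map_eq]
        exact hF.aestronglyMeasurable.pow 2

lemma ou_sub_ae {t : ℝ} (ht : |t| ≤ 1) {F G : E → ℝ} (hF : MemLp F 2 (γ E)) (hG : MemLp G 2 (γ E)) :
    ∀ᵐ g ∂(γ E), ou t (fun x => F x - G x) g = ou t F g - ou t G g := by
  filter_upwards [ou_ae_integrable ht hF, ou_ae_integrable ht hG] with g h1 h2
  exact integral_sub (h1.integrable (by norm_num)) (h2.integrable (by norm_num))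

lemma integrable_mul_of_memLp {Ω : Type*} [MeasurableSpace Ω] {μ : Measure Ω} {f g : Ω → ℝ}
    (hf : MemLp f 2 μ) (hg : MemLp g 2 μ) : Integrable (fun x => f x * g x) μ := hf.integrable_mul hg

/-- A signed combination of Ornstein-Uhlenbeck operators minus the projection on linear functionals. -/
def ouErr {N : ℕ} (t ρ : Fin N → ℝ) (F : E → ℝ) (g : E) : ℝ :=
  ∑ j, ρ j * ou (t j) F g - ⟪gvec F, g⟫

lemma ouErr_memLp {N : ℕ} {t ρ : Fin N → ℝ} (ht : ∀ j, |t j| ≤ 1) {F : E → ℝ} (hF : MemLp F 2 (γ E)) :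
    MemLp (ouErr t ρ F) 2 (γ E) :=
  (memLp_finsetSum _ fun j _ => (ou_sq (ht j) hF).1.const_mul _).sub (gauss_memLp_inner _)

/-- Boundedness of the error operator on `L²(γ)` with a constant depending on the weights; only used
to pass from exponentials to arbitrary functions by density. -/
lemma ouErr_crude {N : ℕ} {t ρ : Fin N → ℝ} (ht : ∀ j, |t j| ≤ 1) {F : E → ℝ} (hF : MemLp F 2 (γ E)) :
    ∫ g, ouErr t ρ F g ^ 2 ∂(γ E) ≤ (2 * (∑ j, ρ j ^ 2) * N + 2) * ∫ x, F x ^ 2 ∂(γ E) := by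
  have hv := (gauss_memLp_inner (gvec F)).integrable_sq
  have hs : Integrable (fun g => ∑ j, ou (t j) F g ^ 2) (γ E) :=
    integrable_finsetSum _ fun j _ => (ou_sq (ht j) hF).1.integrable_sq
  calc ∫ g, ouErr t ρ F g ^ 2 ∂(γ E)
      ≤ ∫ g, (2 * (∑ j, ρ j ^ 2) * ∑ j, ou (t j) F g ^ 2 + 2 * ⟪gvec F, g⟫ ^ 2) ∂(γ E) := by
        refine integral_mono (ouErr_memLp ht hF).integrable_sq ((hs.const_mul _).add (hv.const_mul 2)) fun g => ?_
        have := Finset.sum_mul_sq_le_sq_mul_sq Finset.univ ρ (fun j => ou (t j) F g)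
        simp only [ouErr]
        nlinarith [sq_nonneg (∑ j, ρ j * ou (t j) F g + ⟪gvec F, g⟫)]
    _ = 2 * (∑ j, ρ j ^ 2) * ∑ j, ∫ g, ou (t j) F g ^ 2 ∂(γ E) + 2 * ‖gvec F‖ ^ 2 := by
        rw [integral_add (hs.const_mul _) (hv.const_mul 2), integral_const_mul, integral_const_mul,
          integral_finsetSum _ fun j _ => (ou_sq (ht j) hF).1.integrable_sq]
        congr 2
        simp_rw [sq]
        rw [gauss_integral_inner_mul_inner, real_inner_self_eq_norm_sq, sq]
    _ ≤ 2 * (∑ j, ρ j ^ 2) * ∑ j : Fin N, ∫ x, F x ^ 2 ∂(γ E) + 2 * ∫ x, F x ^ 2 ∂(γ E) := by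
        have hj := Finset.sum_le_sum fun j (_ : j ∈ Finset.univ) => (ou_sq (ht j) hF).2
        have h0 : 0 ≤ 2 * ∑ j, ρ j ^ 2 := by positivity
        linarith [mul_le_mul_of_nonneg_left hj h0, norm_gvec_sq_le hF]
    _ = _ := by simp; ring

/-- Hadamard powers of a Gram matrix are positive semidefinite. -/
lemma gram_pow_nonneg (s : Finset E) (m : ℕ) : ∀ α : E → ℝ,
    0 ≤ ∑ a ∈ s, ∑ b ∈ s, α a * α b * ⟪a, b⟫ ^ m := by
  induction m with
  | zero =>
    intro α
    simp only [pow_zero, mul_one]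
    rw [← Finset.sum_mul_sum]
    exact mul_self_nonneg _
  | succ m ih =>
    intro α
    let e := stdOrthonormalBasis ℝ E
    have : ∑ a ∈ s, ∑ b ∈ s, α a * α b * ⟪a, b⟫ ^ (m + 1)
        = ∑ k, ∑ a ∈ s, ∑ b ∈ s, (α a * ⟪a, e k⟫) * (α b * ⟪b, e k⟫) * ⟪a, b⟫ ^ m := by
      rw [Finset.sum_comm (s := Finset.univ)]
      refine Finset.sum_congr rfl fun a _ => ?_
      rw [Finset.sum_comm (s := Finset.univ)]
      refine Finset.sum_congr rfl fun b _ => ?_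
      rw [pow_succ]
      nth_rw 2 [← e.sum_inner_mul_inner a b]
      rw [Finset.mul_sum, Finset.mul_sum]
      refine Finset.sum_congr rfl fun k _ => ?_
      rw [real_inner_comm b (e k)]
      ring
    rw [this]
    exact Finset.sum_nonneg fun k _ => ih _

lemma ouErr_expo {N : ℕ} {t ρ : Fin N → ℝ} (ht : ∀ j, |t j| ≤ 1) (s : Finset E) (α : E → ℝ) (g : E) :
    ouErr t ρ (fun x => ∑ a ∈ s, α a * expo a x) g
      = ∑ a ∈ s, α a * (∑ j, ρ j * expo (t j • a) g - ⟪a, g⟫) := by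
  simp only [ouErr, gvec_sum_expo, mul_sub, Finset.sum_sub_distrib]
  congr 1
  simp_rw [ou_sum_expo (ht _), Finset.mul_sum]
  rw [Finset.sum_comm]
  refine Finset.sum_congr rfl fun a _ => Finset.sum_congr rfl fun j _ => by ring

lemma integral_sq_sum {Ω ι : Type*} [MeasurableSpace Ω] {μ : Measure Ω}
    (s : Finset ι) (α : ι → ℝ) (f : ι → Ω → ℝ) (hf : ∀ a ∈ s, MemLp (f a) 2 μ) :
    ∫ x, (∑ a ∈ s, α a * f a x) ^ 2 ∂μ
      = ∑ a ∈ s, ∑ b ∈ s, α a * α b * ∫ x, f a x * f b x ∂μ := by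
  simp_rw [sq, Finset.sum_mul_sum]
  have hi : ∀ a ∈ s, ∀ b ∈ s, Integrable (fun x => α a * f a x * (α b * f b x)) μ := fun a ha b hb =>
    ((hf a ha).const_mul (α a)).integrable_mul ((hf b hb).const_mul (α b))
  rw [integral_finsetSum _ fun a ha => integrable_finsetSum _ fun b hb => hi a ha b hb]
  refine Finset.sum_congr rfl fun a ha => ?_
  rw [integral_finsetSum _ fun b hb => hi a ha b hb]
  refine Finset.sum_congr rfl fun b hb => ?_
  rw [← integral_const_mul]
  congr 1; funext x; ring

lemma hasSum_exp_real (x : ℝ) : HasSum (fun m : ℕ => x ^ m / m.factorial) (exp x) := by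
  rw [Real.exp_eq_exp_ℝ]; exact NormedSpace.expSeries_div_hasSum_exp x

/-- On exponentials, the error operator is diagonalised by the power series of `exp`. -/
lemma hasSum_ouErr_kernel {N : ℕ} (t ρ : Fin N → ℝ) (h1 : ∑ j, ρ j * t j = 1) (a b : E) :
    HasSum (fun m : ℕ => ((∑ j, ρ j * t j ^ m) ^ 2 - (if m = 1 then 1 else 0)) / m.factorial * ⟪a, b⟫ ^ m)
      (∫ g, (∑ j, ρ j * expo (t j • a) g - ⟪a, g⟫) * (∑ j, ρ j * expo (t j • b) g - ⟪b, g⟫) ∂(γ E)) := by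
  have hS : ∀ a : E, MemLp (fun g => ∑ j, ρ j * expo (t j • a) g) 2 (γ E) := fun a =>
    memLp_finsetSum _ fun j _ => (memLp_expo _).const_mul _
  have hL : ∀ a : E, MemLp (fun g => ⟪a, g⟫) 2 (γ E) := gauss_memLp_inner
  have hcross : ∀ a b : E, ∫ g, (∑ j, ρ j * expo (t j • a) g) * ⟪b, g⟫ ∂(γ E) = ⟪a, b⟫ := by
    intro a b
    simp_rw [Finset.sum_mul, mul_assoc]
    rw [integral_finsetSum _ fun j _ => (integrable_mul_of_memLp (memLp_expo _) (hL b)).const_mul _]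
    simp_rw [integral_const_mul, integral_expo_mul_inner, real_inner_smul_left, ← mul_assoc]
    rw [← Finset.sum_mul, h1, one_mul]
  have hmain : ∫ g, (∑ j, ρ j * expo (t j • a) g) * (∑ j, ρ j * expo (t j • b) g) ∂(γ E)
      = ∑ j, ∑ k, ρ j * ρ k * exp (t j * t k * ⟪a, b⟫) := by
    simp_rw [Finset.sum_mul_sum]
    have hi : ∀ j k, Integrable (fun g => ρ j * expo (t j • a) g * (ρ k * expo (t k • b) g)) (γ E) := fun j k =>
      ((memLp_expo _).const_mul _).integrable_mul ((memLp_expo _).const_mul _)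
    rw [integral_finsetSum _ fun j _ => integrable_finsetSum _ fun k _ => hi j k]
    refine Finset.sum_congr rfl fun j _ => ?_
    rw [integral_finsetSum _ fun k _ => hi j k]
    refine Finset.sum_congr rfl fun k _ => ?_
    have : ∀ g, ρ j * expo (t j • a) g * (ρ k * expo (t k • b) g) = ρ j * ρ k * (expo (t j • a) g * expo (t k • b) g) :=
      fun g => by ring
    simp_rw [this]
    rw [integral_const_mul, integral_expo_mul_expo, real_inner_smul_left, real_inner_smul_right, mul_assoc (t j)]
  have hval : ∫ g, (∑ j, ρ j * expo (t j • a) g - ⟪a, g⟫) * (∑ j, ρ j * expo (t j • b) g - ⟪b, g⟫) ∂(γ E)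
      = ∑ j, ∑ k, ρ j * ρ k * exp (t j * t k * ⟪a, b⟫) - ⟪a, b⟫ := by
    have e : ∀ g, (∑ j, ρ j * expo (t j • a) g - ⟪a, g⟫) * (∑ j, ρ j * expo (t j • b) g - ⟪b, g⟫)
        = (∑ j, ρ j * expo (t j • a) g) * (∑ j, ρ j * expo (t j • b) g)
          - (∑ j, ρ j * expo (t j • a) g) * ⟪b, g⟫ - (∑ j, ρ j * expo (t j • b) g) * ⟪a, g⟫
          + ⟪a, g⟫ * ⟪b, g⟫ := fun g => by ring
    simp_rw [e]
    have i1 := integrable_mul_of_memLp (hS a) (hS b)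
    have i2 := integrable_mul_of_memLp (hS a) (hL b)
    have i3 := integrable_mul_of_memLp (hS b) (hL a)
    have i4 := integrable_mul_of_memLp (hL a) (hL b)
    rw [integral_add ((i1.sub' i2).sub' i3) i4, integral_sub (i1.sub' i2) i3, integral_sub i1 i2,
      hmain, hcross, hcross, gauss_integral_inner_mul_inner, real_inner_comm a b]
    ring
  rw [hval]
  have hs1 : HasSum (fun m : ℕ => ∑ j, ∑ k, ρ j * ρ k * ((t j * t k * ⟪a, b⟫) ^ m / m.factorial))
      (∑ j, ∑ k, ρ j * ρ k * exp (t j * t k * ⟪a, b⟫)) :=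
    hasSum_sum fun j _ => hasSum_sum fun k _ => (hasSum_exp_real _).mul_left _
  have hs2 : HasSum (fun m : ℕ => if m = 1 then ⟪a, b⟫ else 0) ⟪a, b⟫ := hasSum_ite_eq 1 _
  refine (hs1.sub hs2).congr_fun ?_
  intro m
  have : ∑ j, ∑ k, ρ j * ρ k * ((t j * t k * ⟪a, b⟫) ^ m / m.factorial)
      = (∑ j, ρ j * t j ^ m) ^ 2 / m.factorial * ⟪a, b⟫ ^ m := by
    rw [sq, Finset.sum_mul_sum, Finset.sum_div, Finset.sum_mul]
    refine Finset.sum_congr rfl fun j _ => ?_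
    rw [Finset.sum_div, Finset.sum_mul]
    refine Finset.sum_congr rfl fun k _ => ?_
    rw [mul_pow, mul_pow]; ring
  rw [this]
  split_ifs with h
  · subst h; simp; ring
  · simp

/-- On combinations of exponentials the squared error is a sum over `m ≠ 1` of nonnegative Gram forms
with coefficients `(∑ ρ j (t j) ^ m)² ≤ η²`, compared termwise with the squared norm. -/
lemma ouErr_expo_le {N : ℕ} {t ρ : Fin N → ℝ} (ht : ∀ j, |t j| ≤ 1) {η : ℝ}
    (h1 : ∑ j, ρ j * t j = 1) (hη : ∀ m ≠ 1, |∑ j, ρ j * t j ^ m| ≤ η) (s : Finset E) (α : E → ℝ) :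
    ∫ g, ouErr t ρ (fun x => ∑ a ∈ s, α a * expo a x) g ^ 2 ∂(γ E)
      ≤ η ^ 2 * ∫ g, (∑ a ∈ s, α a * expo a g) ^ 2 ∂(γ E) := by
  simp_rw [ouErr_expo ht]
  have hm : ∀ a : E, MemLp (fun g => ∑ j, ρ j * expo (t j • a) g - ⟪a, g⟫) 2 (γ E) := fun a =>
    (memLp_finsetSum _ fun j _ => (memLp_expo _).const_mul _).sub (gauss_memLp_inner a)
  rw [integral_sq_sum s α _ fun a _ => hm a, integral_sq_sum s α _ fun a _ => memLp_expo a]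
  have hA : HasSum (fun m : ℕ => ∑ a ∈ s, ∑ b ∈ s, α a * α b *
      (((∑ j, ρ j * t j ^ m) ^ 2 - (if m = 1 then 1 else 0)) / m.factorial * ⟪a, b⟫ ^ m)) _ :=
    hasSum_sum fun a _ => hasSum_sum fun b _ => (hasSum_ouErr_kernel t ρ h1 a b).mul_left (α a * α b)
  have hB : HasSum (fun m : ℕ => η ^ 2 * ∑ a ∈ s, ∑ b ∈ s, α a * α b * (⟪a, b⟫ ^ m / m.factorial))
      (η ^ 2 * ∑ a ∈ s, ∑ b ∈ s, α a * α b * ∫ x, expo a x * expo b x ∂(γ E)) := by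
    refine (hasSum_sum fun a _ => hasSum_sum fun b _ => ?_).mul_left _
    rw [integral_expo_mul_expo]
    exact (hasSum_exp_real _).mul_left _
  refine hasSum_le ?_ hA hB
  intro m
  have e1 : ∑ a ∈ s, ∑ b ∈ s, α a * α b *
      (((∑ j, ρ j * t j ^ m) ^ 2 - (if m = 1 then 1 else 0)) / m.factorial * ⟪a, b⟫ ^ m)
      = (((∑ j, ρ j * t j ^ m) ^ 2 - (if m = 1 then 1 else 0)) / m.factorial) * ∑ a ∈ s, ∑ b ∈ s, α a * α b * ⟪a, b⟫ ^ m := by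
    simp_rw [Finset.mul_sum]
    refine Finset.sum_congr rfl fun a _ => Finset.sum_congr rfl fun b _ => by ring
  have e2 : η ^ 2 * ∑ a ∈ s, ∑ b ∈ s, α a * α b * (⟪a, b⟫ ^ m / m.factorial)
      = (η ^ 2 / m.factorial) * ∑ a ∈ s, ∑ b ∈ s, α a * α b * ⟪a, b⟫ ^ m := by
    simp_rw [Finset.mul_sum]
    refine Finset.sum_congr rfl fun a _ => Finset.sum_congr rfl fun b _ => by ring
  rw [e1, e2]
  refine mul_le_mul_of_nonneg_right ?_ (gram_pow_nonneg s m α)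
  gcongr
  split_ifs with h
  · subst h
    simp only [pow_one, h1]
    norm_num
    positivity
  · rw [sub_zero]; exact sq_le_sq' (by linarith [neg_abs_le (∑ j, ρ j * t j ^ m), hη m h]) ((le_abs_self _).trans (hη m h))

/-- The combination of Ornstein-Uhlenbeck operators with the given weights agrees with the
projection on linear functionals up to an `L²` error of relative size `2 η`. -/
lemma ouErr_le {N : ℕ} {t ρ : Fin N → ℝ} (ht : ∀ j, |t j| ≤ 1) {η : ℝ}
    (h1 : ∑ j, ρ j * t j = 1) (hη : ∀ m ≠ 1, |∑ j, ρ j * t j ^ m| ≤ η) {F : E → ℝ}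
    (hF : MemLp F 2 (γ E)) :
    ∫ g, ouErr t ρ F g ^ 2 ∂(γ E) ≤ 4 * η ^ 2 * ∫ g, F g ^ 2 ∂(γ E) := by
  set C := 2 * (∑ j, ρ j ^ 2) * N + 2 with hC
  have hC0 : 0 ≤ C := by positivity
  have key : ∀ δ > 0, ∫ g, ouErr t ρ F g ^ 2 ∂(γ E) ≤ 4 * η ^ 2 * ∫ g, F g ^ 2 ∂(γ E) + (4 * η ^ 2 + 2 * C) * δ := by
    intro δ hδ
    obtain ⟨s, α, hsα⟩ := exists_expo_approx hF hδ
    set φ : E → ℝ := fun x => ∑ a ∈ s, α a * expo a x with hφ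
    have hφm : MemLp φ 2 (γ E) := memLp_finsetSum _ fun a _ => (memLp_expo a).const_mul _
    have hd : MemLp (fun x => F x - φ x) 2 (γ E) := hF.sub hφm
    have hsplit : ∀ᵐ g ∂(γ E), ouErr t ρ (fun x => F x - φ x) g = ouErr t ρ F g - ouErr t ρ φ g := by
      have : ∀ᵐ g ∂(γ E), ∀ j, ou (t j) (fun x => F x - φ x) g = ou (t j) F g - ou (t j) φ g :=
        ae_all_iff.2 fun j => ou_sub_ae (ht j) hF hφm
      filter_upwards [this] with g hg
      simp only [ouErr, hg, gvec_sub hF hφm, inner_sub_left, mul_sub, Finset.sum_sub_distrib]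
      ring
    have i1 := (ouErr_memLp (ρ := ρ) ht hF).integrable_sq
    have i2 := (ouErr_memLp (ρ := ρ) ht hφm).integrable_sq
    have i3 := (ouErr_memLp (ρ := ρ) ht hd).integrable_sq
    have b1 : ∫ g, ouErr t ρ F g ^ 2 ∂(γ E) ≤ 2 * ∫ g, ouErr t ρ φ g ^ 2 ∂(γ E)
        + 2 * ∫ g, ouErr t ρ (fun x => F x - φ x) g ^ 2 ∂(γ E) := by
      rw [← integral_const_mul, ← integral_const_mul, ← integral_add (i2.const_mul 2) (i3.const_mul 2)]
      refine integral_mono_ae i1 ((i2.const_mul 2).add (i3.const_mul 2)) ?_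
      filter_upwards [hsplit] with g hg
      simp only [hg]
      nlinarith [sq_nonneg (ouErr t ρ F g - 2 * ouErr t ρ φ g)]
    have b2 : ∫ g, φ g ^ 2 ∂(γ E) ≤ 2 * ∫ g, F g ^ 2 ∂(γ E) + 2 * ∫ g, (F g - φ g) ^ 2 ∂(γ E) := by
      rw [← integral_const_mul, ← integral_const_mul, ← integral_add (hF.integrable_sq.const_mul 2) (hd.integrable_sq.const_mul 2)]
      refine integral_mono hφm.integrable_sq ((hF.integrable_sq.const_mul 2).add (hd.integrable_sq.const_mul 2)) fun g => ?_
      simp only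
      nlinarith [sq_nonneg (2 * F g - φ g)]
    have b3 := ouErr_expo_le ht h1 hη s α
    have b4 := ouErr_crude (ρ := ρ) ht hd
    rw [← hC] at b4
    have b5 : C * ∫ x, (F x - φ x) ^ 2 ∂(γ E) ≤ C * δ := mul_le_mul_of_nonneg_left hsα hC0
    have b6 : η ^ 2 * ∫ g, φ g ^ 2 ∂(γ E) ≤ η ^ 2 * (2 * ∫ g, F g ^ 2 ∂(γ E) + 2 * δ) := by
      refine mul_le_mul_of_nonneg_left (b2.trans ?_) (sq_nonneg _)
      linarith
    linarith
  refine le_of_forall_pos_le_add fun ε hε => ?_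
  have hpos : 0 < 4 * η ^ 2 + 2 * C + 1 := by positivity
  refine (key (ε / (4 * η ^ 2 + 2 * C + 1)) (by positivity)).trans ?_
  gcongr
  rw [mul_div_assoc', div_le_iff₀ hpos]
  nlinarith

end OU

/-! ### Isotropic convex bodies -/

section Body

variable {n : ℕ} {K : Set (EuclideanSpace ℝ (Fin n))}

local notation "𝔼" => EuclideanSpace ℝ (Fin n)

lemma IsConvexBody.volume_pos (hK : IsConvexBody K) : 0 < volume K :=
  (isOpen_interior.measure_pos volume hK.2.2).trans_le (measure_mono interior_subset)

lemma IsConvexBody.measurableSet (hK : IsConvexBody K) : MeasurableSet K := hK.1.measurableSet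

lemma IsConvexBody.isProb (hK : IsConvexBody K) : IsProbabilityMeasure (unifOn K) := by
  refine ⟨?_⟩
  rw [unifOn, Measure.smul_apply, Measure.restrict_apply_univ, smul_eq_mul]
  exact ENNReal.inv_mul_cancel hK.volume_pos.ne' hK.1.measure_lt_top.ne

lemma IsConvexBody.ae_mem (hK : IsConvexBody K) : ∀ᵐ x ∂(unifOn K), x ∈ K :=
  Measure.ae_smul_measure (ae_restrict_mem hK.measurableSet) _

lemma unifOn_integral (f : 𝔼 → ℝ) :
    ∫ x, f x ∂(unifOn K) = (volume K)⁻¹.toReal * ∫ x in K, f x := by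
  rw [unifOn, integral_smul_measure, smul_eq_mul]

lemma IsConvexBody.integrable (hK : IsConvexBody K) {F : Type*} [NormedAddCommGroup F] {f : 𝔼 → F}
    (hf : Continuous f) : Integrable f (unifOn K) :=
  (hf.continuousOn.integrableOn_compact hK.1).smul_measure
    (ENNReal.inv_ne_top.2 hK.volume_pos.ne')

lemma isotropic_mean (hK : IsConvexBody K) (hI : IsIsotropicBody K) (u : 𝔼) :
    ∫ x, ⟪u, x⟫ ∂(unifOn K) = 0 := by
  have : ∀ x : 𝔼, ⟪u, x⟫ = ∑ i, u i * x i := fun x => by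
    rw [PiLp.inner_apply]; simp [mul_comm]
  simp_rw [this]
  rw [integral_finsetSum _ fun i _ => hK.integrable (by fun_prop)]
  refine Finset.sum_eq_zero fun i _ => ?_
  rw [integral_const_mul, hI.1 i, mul_zero]

lemma isotropic_var (hK : IsConvexBody K) (hI : IsIsotropicBody K) (u : 𝔼) :
    ∫ x, ⟪u, x⟫ ^ 2 ∂(unifOn K) = ‖u‖ ^ 2 := by
  have : ∀ x : 𝔼, ⟪u, x⟫ ^ 2 = ∑ i, ∑ j, u i * u j * (x i * x j) := fun x => by
    rw [PiLp.inner_apply, sq, Finset.sum_mul_sum]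
    refine Finset.sum_congr rfl fun i _ => Finset.sum_congr rfl fun j _ => ?_
    simp; ring
  simp_rw [this]
  rw [integral_finsetSum _ fun i _ => hK.integrable (by fun_prop)]
  have h2 : ∀ i, ∫ x : 𝔼, ∑ j, u i * u j * (x i * x j) ∂(unifOn K) = u i ^ 2 := fun i => by
    rw [integral_finsetSum _ fun j _ => hK.integrable (by fun_prop)]
    simp_rw [integral_const_mul, hI.2]
    simp [sq]
  simp_rw [h2]
  rw [EuclideanSpace.norm_sq_eq]; simp

lemma isotropic_zero_mem (hK : IsConvexBody K) (hI : IsIsotropicBody K) : (0 : 𝔼) ∈ K := by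
  have := hK.isProb
  have h := hK.2.1.integral_mem hK.1.isClosed hK.ae_mem (hK.integrable continuous_id)
  convert h using 1
  refine (ext_inner_left ℝ fun u => ?_).symm
  rw [← integral_inner (f := fun x : 𝔼 => x) (hK.integrable continuous_id)]
  simpa using isotropic_mean hK hI u

/-- Contracting a convex body towards one of its points `y` costs only the Jacobian factor. -/
lemma unifOn_contract (hK : IsConvexBody K) {y : 𝔼} (hy : y ∈ K) {ε : ℝ} (h0 : 0 ≤ ε) (h1 : ε < 1)
    {f : 𝔼 → ℝ} (hf : Continuous f) (hf0 : ∀ x, 0 ≤ f x) :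
    (1 - ε) ^ n * ∫ x, f ((1 - ε) • x + ε • y) ∂(unifOn K) ≤ ∫ x, f x ∂(unifOn K) := by
  have hc : 0 < 1 - ε := by linarith
  rw [unifOn_integral, unifOn_integral, mul_left_comm]
  refine mul_le_mul_of_nonneg_left ?_ ENNReal.toReal_nonneg
  set F : 𝔼 → ℝ := K.indicator f with hF
  have hF0 : ∀ x, 0 ≤ F x := fun x => Set.indicator_nonneg (fun x _ => hf0 x) x
  have hFi : Integrable F := (integrable_indicator_iff hK.measurableSet).2 (hf.continuousOn.integrableOn_compact hK.1)
  have hGi : Integrable (fun x => F (x + ε • y)) := hFi.comp_add_right _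
  have hHi : Integrable (fun x => F ((1 - ε) • x + ε • y)) := hGi.comp_smul hc.ne'
  have e : ∫ x, F ((1 - ε) • x + ε • y) = ((1 - ε) ^ n)⁻¹ * ∫ x, F x := by
    have := Measure.integral_comp_smul (volume : Measure 𝔼) (fun x => F (x + ε • y)) (1 - ε)
    rw [this, integral_add_right_eq_self, finrank_euclideanSpace_fin, smul_eq_mul, abs_of_pos (by positivity)]
  have h2 : ∫ x in K, f ((1 - ε) • x + ε • y) ≤ ∫ x, F ((1 - ε) • x + ε • y) := by
    rw [← integral_indicator hK.measurableSet]
    refine integral_mono ?_ hHi fun x => ?_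
    · rw [integrable_indicator_iff hK.measurableSet]
      exact (by fun_prop : Continuous fun x : 𝔼 => f ((1 - ε) • x + ε • y)).continuousOn.integrableOn_compact hK.1
    · by_cases hx : x ∈ K
      · rw [Set.indicator_of_mem hx, hF]
        simp only
        rw [Set.indicator_of_mem]
        exact hK.2.1 hx hy hc.le h0 (by ring)
      · rw [Set.indicator_of_notMem hx]; exact hF0 _
  calc (1 - ε) ^ n * ∫ x in K, f ((1 - ε) • x + ε • y) ≤ (1 - ε) ^ n * ∫ x, F ((1 - ε) • x + ε • y) := by gcongr
    _ = ∫ x, F x := by rw [e, ← mul_assoc, mul_inv_cancel₀ (by positivity), one_mul]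
    _ = ∫ x in K, f x := integral_indicator hK.measurableSet

lemma exp_neg_two_mul_le {x : ℝ} (h0 : 0 ≤ x) (h1 : x ≤ 1 / 2) : exp (-(2 * x)) ≤ 1 - x := by
  rw [exp_neg, inv_le_comm₀ (exp_pos _) (by linarith)]
  have h2 := add_one_le_exp (2 * x)
  refine le_trans ?_ h2
  rw [inv_le_iff_one_le_mul₀ (by linarith)]
  nlinarith

/-- An isotropic convex body lies in a ball of radius `O(n)`: contracting it by `1 - 1 / n` towards `y`
shows that `∫ ⟪y, x⟫² ≥ ‖y‖⁴ / (9 n²)`, while isotropicity gives `‖y‖²`. -/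
lemma isotropic_norm_le (hn : 2 ≤ n) (hK : IsConvexBody K) (hI : IsIsotropicBody K) {y : 𝔼} (hy : y ∈ K) :
    ‖y‖ ≤ 3 * n := by
  have := hK.isProb
  have hn0 : (0 : ℝ) < n := by positivity
  have hn2 : (2 : ℝ) ≤ n := by exact_mod_cast hn
  rcases eq_or_ne y 0 with rfl | hy0
  · simp
  set ε : ℝ := 1 / n with hε
  have hε0 : 0 < ε := by positivity
  have hε1 : ε ≤ 1 / 2 := one_div_le_one_div_of_le (by norm_num) hn2
  have h := unifOn_contract hK hy hε0.le (by linarith) (f := fun x => ⟪y, x⟫ ^ 2) (by fun_prop) (fun x => sq_nonneg _)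
  rw [isotropic_var hK hI] at h
  have e : ∀ x : 𝔼, ⟪y, (1 - ε) • x + ε • y⟫ ^ 2 = (1 - ε) ^ 2 * ⟪y, x⟫ ^ 2 + 2 * (1 - ε) * ε * ‖y‖ ^ 2 * ⟪y, x⟫ + ε ^ 2 * ‖y‖ ^ 4 := by
    intro x
    rw [inner_add_right, real_inner_smul_right, real_inner_smul_right, real_inner_self_eq_norm_sq]
    ring
  simp_rw [e] at h
  rw [integral_add (hK.integrable (by fun_prop)) (hK.integrable (by fun_prop)),
    integral_add (hK.integrable (by fun_prop)) (hK.integrable (by fun_prop)), integral_const_mul,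
    integral_const_mul, isotropic_mean hK hI, isotropic_var hK hI] at h
  simp only [mul_zero, add_zero, integral_const, probReal_univ, smul_eq_mul, one_mul] at h
  have h3 : (1 : ℝ) / 9 ≤ (1 - ε) ^ n := by
    have h4 : exp (-(2 * ε)) ^ n ≤ (1 - ε) ^ n := by
      gcongr; exact exp_neg_two_mul_le hε0.le hε1
    refine le_trans ?_ h4
    rw [← exp_nat_mul, hε, show (n : ℝ) * -(2 * (1 / n)) = -2 by field_simp, exp_neg,
      one_div, inv_le_inv₀ (by norm_num) (exp_pos _)]
    have : exp 2 = exp 1 * exp 1 := by rw [← exp_add]; norm_num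
    rw [this]
    nlinarith [exp_one_lt_d9, exp_pos 1]
  have hy2 : 0 < ‖y‖ ^ 2 := by positivity
  have h5 : (1 / 9) * (ε ^ 2 * ‖y‖ ^ 4) ≤ ‖y‖ ^ 2 := by
    refine le_trans ?_ h
    refine mul_le_mul h3 ?_ (by positivity) (by linarith)
    nlinarith [mul_nonneg (sq_nonneg (1 - ε)) hy2.le]
  have h6 : ε ^ 2 * ‖y‖ ^ 2 ≤ 9 := by
    by_contra hcon
    push Not at hcon
    nlinarith
  rw [hε, div_pow, one_pow, one_div, inv_mul_le_iff₀ (by positivity)] at h6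
  exact abs_le_of_sq_le_sq' (by nlinarith) (by positivity) |>.2

/-- Tangent-line form of Jensen's inequality for `exp (-Z)`. -/
lemma exp_neg_le_integral {Ω : Type*} [MeasurableSpace Ω] {μ : Measure Ω} [IsProbabilityMeasure μ]
    {Z : Ω → ℝ} (hZ : Integrable Z μ) (h0 : ∀ x, 0 ≤ Z x) {m : ℝ} (hm : ∫ x, Z x ∂μ ≤ m) :
    exp (-m) ≤ ∫ x, exp (-Z x) ∂μ := by
  have hi : Integrable (fun x => exp (-Z x)) μ := by
    refine Integrable.of_bound (C := 1) (by fun_prop) (Filter.Eventually.of_forall fun x => ?_)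
    rw [Real.norm_eq_abs, abs_of_pos (exp_pos _), exp_le_one_iff]; linarith [h0 x]
  have h1 : ∫ x, exp (-m) * (1 + m - Z x) ∂μ ≤ ∫ x, exp (-Z x) ∂μ := by
    refine integral_mono (((integrable_const _).sub hZ).const_mul _) hi fun x => ?_
    have := add_one_le_exp (m - Z x)
    calc exp (-m) * (1 + m - Z x) ≤ exp (-m) * exp (m - Z x) := by
          gcongr; linarith
      _ = exp (-Z x) := by rw [← exp_add]; congr 1; ring
  refine le_trans ?_ h1
  rw [integral_const_mul, integral_sub (integrable_const _) hZ]
  simp only [integral_const, probReal_univ, smul_eq_mul, one_mul]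
  nlinarith [exp_pos (-m)]

/-- For `y ∈ K`, a uniform random vector `X` in `K` has, in the unit directions `u i`, `i ∈ s`,
coordinates close to those of `ε y` with weight at least `(1 - ε) ^ n exp (-#s)`: contract `K` towards
`y` and apply Jensen's inequality to the remaining fluctuations, which have variance at most one. -/
lemma isotropic_lower (hK : IsConvexBody K) (hI : IsIsotropicBody K) (u : Fin n → 𝔼)
    (hu : ∀ i, ‖u i‖ = 1) (s : Finset (Fin n)) (b : Fin n → ℝ) {y : 𝔼} (hy : y ∈ K) {ε : ℝ}
    (h0 : 0 ≤ ε) (h1 : ε < 1) :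
    (1 - ε) ^ n * exp (-(s.card : ℝ)) * exp (-∑ i ∈ s, (ε * ⟪u i, y⟫ - b i) ^ 2)
      ≤ ∫ x, exp (-∑ i ∈ s, (⟪u i, x⟫ - b i) ^ 2) ∂(unifOn K) := by
  have := hK.isProb
  refine le_trans ?_ (unifOn_contract hK hy h0 h1 (f := fun x => exp (-∑ i ∈ s, (⟪u i, x⟫ - b i) ^ 2))
    (by fun_prop) fun x => (exp_pos _).le)
  rw [mul_assoc]
  have hc : 0 < 1 - ε := by linarith
  refine mul_le_mul_of_nonneg_left ?_ (by positivity)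
  rw [← exp_add, ← neg_add]
  refine exp_neg_le_integral (hK.integrable (by fun_prop)) (fun x => by positivity) ?_
  rw [integral_finsetSum _ fun i _ => hK.integrable (by fun_prop)]
  have e : ∀ i, ∫ x : 𝔼, (⟪u i, (1 - ε) • x + ε • y⟫ - b i) ^ 2 ∂(unifOn K) = (1 - ε) ^ 2 + (ε * ⟪u i, y⟫ - b i) ^ 2 := by
    intro i
    have e1 : ∀ x : 𝔼, (⟪u i, (1 - ε) • x + ε • y⟫ - b i) ^ 2 = (1 - ε) ^ 2 * ⟪u i, x⟫ ^ 2
        + 2 * (1 - ε) * (ε * ⟪u i, y⟫ - b i) * ⟪u i, x⟫ + (ε * ⟪u i, y⟫ - b i) ^ 2 := by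
      intro x
      rw [inner_add_right, real_inner_smul_right, real_inner_smul_right]
      ring
    simp_rw [e1]
    rw [integral_add (hK.integrable (by fun_prop)) (hK.integrable (by fun_prop)),
      integral_add (hK.integrable (by fun_prop)) (hK.integrable (by fun_prop)), integral_const_mul,
      integral_const_mul, isotropic_mean hK hI, isotropic_var hK hI, hu]
    simp
  simp_rw [e]
  rw [Finset.sum_add_distrib]
  simp only [Finset.sum_const, nsmul_eq_mul]
  have : (1 - ε) ^ 2 ≤ 1 := by nlinarith
  nlinarith [(Nat.cast_nonneg s.card : (0 : ℝ) ≤ s.card)]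

end Body

/-! ### Volume comparison for the singular values -/

section Level

variable {n : ℕ} {K : Set (EuclideanSpace ℝ (Fin n))}

local notation "𝔼" => EuclideanSpace ℝ (Fin n)
local notation "γ" => ProbabilityTheory.stdGaussian

lemma gaussianReal_small_ball (b : ℝ) {τ : ℝ} (hτ : 0 < τ) :
    ∫ x, exp (-(b - τ * x) ^ 2) ∂(ProbabilityTheory.gaussianReal 0 1) ≤ 1 / τ := by
  rw [ProbabilityTheory.integral_gaussianReal_eq_integral_smul (by simp)]
  have hi : Integrable (fun x : ℝ => exp (-(b - τ * x) ^ 2)) := by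
    have h := (integrable_exp_neg_mul_sq (b := τ ^ 2) (by positivity)).comp_sub_right (b / τ)
    refine h.congr (Filter.Eventually.of_forall fun x => ?_)
    simp only
    congr 1; field_simp; ring
  have hv : ∫ x : ℝ, exp (-(b - τ * x) ^ 2) = √(π / τ ^ 2) := by
    rw [← integral_gaussian, ← integral_sub_right_eq_self (fun x => exp (-τ ^ 2 * x ^ 2)) (b / τ)]
    congr 1; funext x
    congr 1; field_simp; ring
  have hpdf : ∀ x, ProbabilityTheory.gaussianPDFReal 0 1 x ≤ (√(2 * π))⁻¹ := by
    intro x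
    simp only [ProbabilityTheory.gaussianPDFReal]
    have : exp (-(x - 0) ^ 2 / (2 * (1 : NNReal))) ≤ 1 := exp_le_one_iff.2 (by
      simp only [NNReal.coe_one]; nlinarith [sq_nonneg (x - 0)])
    have h2 : (0 : ℝ) ≤ (√(2 * π))⁻¹ := by positivity
    simpa using mul_le_mul_of_nonneg_left this h2
  calc ∫ x, ProbabilityTheory.gaussianPDFReal 0 1 x • exp (-(b - τ * x) ^ 2)
      ≤ ∫ x, (√(2 * π))⁻¹ * exp (-(b - τ * x) ^ 2) := by
        refine integral_mono_of_nonneg (Filter.Eventually.of_forall fun x => ?_) (hi.const_mul _) (Filter.Eventually.of_forall fun x => ?_)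
        · exact smul_nonneg (ProbabilityTheory.gaussianPDFReal_nonneg _ _ _) (exp_pos _).le
        · exact mul_le_mul_of_nonneg_right (hpdf x) (exp_pos _).le
    _ = (√(2 * π))⁻¹ * (√π / τ) := by
        rw [integral_const_mul, hv, Real.sqrt_div pi_pos.le, Real.sqrt_sq hτ.le]
    _ ≤ 1 / τ := by
        rw [← mul_div_assoc]
        gcongr
        rw [inv_mul_le_iff₀ (by positivity), mul_one]
        exact Real.sqrt_le_sqrt (by linarith [pi_pos])

/-- The weight of a Gaussian vector with independent coordinates of standard deviation at least
`c * σ` near any fixed point; the integral factors over an orthonormal basis extending the `w i`. -/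
lemma gauss_small_ball (w : Fin n → 𝔼) (s : Finset (Fin n)) (b : Fin n → ℝ)
    (hw : ∀ i ∈ s, ∀ j ∈ s, i ≠ j → ⟪w i, w j⟫ = 0) {c σ : ℝ} (hc : 0 < c) (hσ : 0 < σ)
    (hwσ : ∀ i ∈ s, σ ≤ ‖w i‖) :
    ∫ g, exp (-∑ i ∈ s, (b i - c * ⟪w i, g⟫) ^ 2) ∂(γ 𝔼) ≤ (1 / (c * σ)) ^ s.card := by
  have hw0 : ∀ i ∈ s, 0 < ‖w i‖ := fun i hi => hσ.trans_le (hwσ i hi)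
  have hon : Orthonormal ℝ ((s : Set (Fin n)).domRestrict fun i => (‖w i‖⁻¹) • w i) := by
    refine ⟨fun i => ?_, fun i j hij => ?_⟩
    · change ‖(‖w i‖⁻¹) • w i‖ = 1
      rw [norm_smul, norm_inv, norm_norm]
      exact inv_mul_cancel₀ (hw0 i i.2).ne'
    · change ⟪(‖w i‖⁻¹) • w i, (‖w j‖⁻¹) • w j⟫ = 0
      rw [real_inner_smul_left, real_inner_smul_right, hw i i.2 j j.2 (fun h => hij (Subtype.ext h))]
      simp
  obtain ⟨e, he⟩ := hon.exists_orthonormalBasis_extension_of_card_eq (by simp)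
  have hwe : ∀ i ∈ s, w i = ‖w i‖ • e i := fun i hi => by
    rw [he i hi, smul_smul, mul_inv_cancel₀ (hw0 i hi).ne', one_smul]
  rw [ProbabilityTheory.stdGaussian_eq_map_pi_orthonormalBasis e, 
    integral_map (Measurable.aemeasurable (by fun_prop)) (Continuous.aestronglyMeasurable (by fun_prop))]
  let f : Fin n → ℝ → ℝ := fun i x => if i ∈ s then exp (-(b i - c * ‖w i‖ * x) ^ 2) else 1
  have hprod : ∀ x : Fin n → ℝ, exp (-∑ i ∈ s, (b i - c * ⟪w i, ∑ j, x j • e j⟫) ^ 2) = ∏ i, f i (x i) := by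
    intro x
    simp only [f]
    rw [Finset.prod_ite_mem, Finset.univ_inter, ← Finset.sum_neg_distrib, exp_sum]
    refine Finset.prod_congr rfl fun i hi => ?_
    have : ⟪w i, ∑ j, x j • e j⟫ = ‖w i‖ * x i := by
      rw [hwe i hi, real_inner_smul_left, norm_smul, e.norm_eq_one, norm_norm, mul_one, inner_sum]
      congr 1
      simp [real_inner_smul_right, e.inner_eq_ite]
    rw [this, mul_assoc]
  simp_rw [hprod]
  rw [integral_fintype_prod_eq_prod]
  have hcard : (1 / (c * σ)) ^ s.card = ∏ i : Fin n, if i ∈ s then 1 / (c * σ) else 1 := by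
    rw [Finset.prod_ite_mem, Finset.univ_inter, Finset.prod_const]
  rw [hcard]
  refine Finset.prod_le_prod (fun i _ => integral_nonneg fun x => ?_) fun i _ => ?_
  · simp only [f]; split_ifs <;> positivity
  · simp only [f]
    split_ifs with hi
    · refine (gaussianReal_small_ball _ (mul_pos hc (hw0 i hi))).trans ?_
      have := hwσ i hi
      gcongr
    · simp

/-- If `w i` are orthogonal with norm at least `σ` for `i ∈ s`, and `⟪w i, g⟫` is within `L²`
distance one of `a ⟪u i, y₁ g - y₂ g⟫` for `K`-valued maps `y₁`, `y₂`, then `σ = O(n a / #s)`. The proof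
compares two bounds on the mean of `exp (-∑ (⟪u i, X₂ - X₁⟫ - c ⟪w i, g⟫)²)` for `X₁, X₂` uniform in `K`
and `g` Gaussian, all independent: from below at fixed `g` by `isotropic_lower`, from above at fixed
`X₁, X₂` by `gauss_small_ball`. -/
lemma level_bound (hn : 0 < n) (hK : IsConvexBody K) (hI : IsIsotropicBody K) (u : Fin n → 𝔼)
    (hu : ∀ i, ‖u i‖ = 1) (w : Fin n → 𝔼) {a : ℝ} (ha : 1 ≤ a) (y₁ y₂ : 𝔼 → 𝔼)
    (hy₁ : ∀ g, y₁ g ∈ K) (hy₂ : ∀ g, y₂ g ∈ K)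
    (hTm : ∀ i, MemLp (fun g => a * ⟪u i, y₁ g - y₂ g⟫ - ⟪w i, g⟫) 2 (γ 𝔼))
    (hT : ∀ i, ∫ g, (a * ⟪u i, y₁ g - y₂ g⟫ - ⟪w i, g⟫) ^ 2 ∂(γ 𝔼) ≤ 1)
    (s : Finset (Fin n)) (hs : s.Nonempty)
    (hw : ∀ i ∈ s, ∀ j ∈ s, i ≠ j → ⟪w i, w j⟫ = 0) {σ : ℝ} (hσ : 0 < σ)
    (hwσ : ∀ i ∈ s, σ ≤ ‖w i‖) :
    σ ≤ 2 * exp 5 * n * a / s.card := by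
  have := hK.isProb
  set k := s.card with hk
  have hk0 : 0 < k := hs.card_pos
  have hkn : k ≤ n := by simpa using s.card_le_univ
  have hn' : (0 : ℝ) < n := by exact_mod_cast hn
  have hk' : (0 : ℝ) < k := by exact_mod_cast hk0
  have hkn' : (k : ℝ) ≤ n := by exact_mod_cast hkn
  -- the largest contraction, up to constants, whose Jacobian `(1 - ε) ^ n` is still `exp (-O(k))`
  set ε : ℝ := k / (2 * n) with hε
  have hε0 : 0 < ε := by positivity
  have hε1 : ε ≤ 1 / 2 := by rw [hε, div_le_iff₀ (by positivity)]; linarith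
  have ha0 : 0 < a := by linarith
  set c := ε / a with hc
  have hc0 : 0 < c := by positivity
  have hc1 : c ≤ 1 := by rw [hc, div_le_one ha0]; linarith
  have hca : c * a = ε := by rw [hc]; field_simp
  let Φ : 𝔼 → 𝔼 × 𝔼 → ℝ := fun g p => exp (-∑ i ∈ s, (⟪u i, p.2⟫ - (⟪u i, p.1⟫ + c * ⟪w i, g⟫)) ^ 2)
  let ν := (unifOn K).prod (unifOn K)
  have hΦ1 : ∀ g p, Φ g p ≤ 1 := fun g p => exp_le_one_iff.2 (by
    have : 0 ≤ ∑ i ∈ s, (⟪u i, p.2⟫ - (⟪u i, p.1⟫ + c * ⟪w i, g⟫)) ^ 2 := by positivity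
    linarith)
  have hΦ0 : ∀ g p, 0 ≤ Φ g p := fun g p => (exp_pos _).le
  have hΦc : Continuous (Function.uncurry Φ) := by
    simp only [Φ, Function.uncurry_def]; fun_prop
  have hΦi : Integrable (Function.uncurry Φ) ((γ 𝔼).prod ν) := by
    refine Integrable.of_bound (C := 1) hΦc.aestronglyMeasurable (Filter.Eventually.of_forall fun p => ?_)
    rw [Real.norm_eq_abs]
    change |Φ p.1 p.2| ≤ 1
    rw [abs_of_nonneg (hΦ0 _ _)]
    exact hΦ1 _ _
  -- first contract the second copy of `K` towards `y₁ g`, then the first copy towards `y₂ g`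
  have hlow : ∀ g, exp (-(4 * k : ℝ)) * exp (-∑ i ∈ s, c ^ 2 * (a * ⟪u i, y₁ g - y₂ g⟫ - ⟪w i, g⟫) ^ 2) ≤ ∫ p, Φ g p ∂ν := by
    intro g
    have hi : Integrable (Φ g) ν := by
      refine Integrable.of_bound (C := 1) (by fun_prop) (Filter.Eventually.of_forall fun p => ?_)
      rw [Real.norm_eq_abs, abs_of_nonneg (hΦ0 _ _)]; exact hΦ1 _ _
    rw [integral_prod _ hi]
    have hfac : exp (-k : ℝ) ≤ (1 - ε) ^ n := by
      have h4 : exp (-(2 * ε)) ^ n ≤ (1 - ε) ^ n := by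
        gcongr; exact exp_neg_two_mul_le hε0.le hε1
      refine le_trans (le_of_eq ?_) h4
      rw [← exp_nat_mul, hε]; congr 1; field_simp
    have hA : ∀ x₁, exp (-k : ℝ) * exp (-k : ℝ) * exp (-∑ i ∈ s, (⟪u i, x₁⟫ - (ε * ⟪u i, y₁ g⟫ - c * ⟪w i, g⟫)) ^ 2)
        ≤ ∫ x₂, Φ g (x₁, x₂) ∂(unifOn K) := by
      intro x₁
      refine le_trans ?_ (isotropic_lower hK hI u hu s (fun i => ⟪u i, x₁⟫ + c * ⟪w i, g⟫) (hy₁ g) hε0.le (by linarith))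
      rw [← hk]
      have e : ∀ i, (ε * ⟪u i, y₁ g⟫ - (⟪u i, x₁⟫ + c * ⟪w i, g⟫)) ^ 2 = (⟪u i, x₁⟫ - (ε * ⟪u i, y₁ g⟫ - c * ⟪w i, g⟫)) ^ 2 :=
        fun i => by ring
      simp_rw [e]
      gcongr
    have hB := isotropic_lower hK hI u hu s (fun i => ε * ⟪u i, y₁ g⟫ - c * ⟪w i, g⟫) (hy₂ g) hε0.le (by linarith)
    rw [← hk] at hB
    have hC : exp (-k : ℝ) * exp (-k : ℝ) * ∫ x₁, exp (-∑ i ∈ s, (⟪u i, x₁⟫ - (ε * ⟪u i, y₁ g⟫ - c * ⟪w i, g⟫)) ^ 2) ∂(unifOn K)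
        ≤ ∫ x₁, ∫ x₂, Φ g (x₁, x₂) ∂(unifOn K) ∂(unifOn K) := by
      rw [← integral_const_mul]
      exact integral_mono (hK.integrable (by fun_prop)) hi.integral_prod_left hA
    refine le_trans ?_ hC
    have e : ∀ i, (ε * ⟪u i, y₂ g⟫ - (ε * ⟪u i, y₁ g⟫ - c * ⟪w i, g⟫)) ^ 2 = c ^ 2 * (a * ⟪u i, y₁ g - y₂ g⟫ - ⟪w i, g⟫) ^ 2 := by
      intro i
      rw [inner_sub_right, ← hca]; ring
    simp_rw [e] at hB
    calc exp (-(4 * k : ℝ)) * exp (-∑ i ∈ s, c ^ 2 * (a * ⟪u i, y₁ g - y₂ g⟫ - ⟪w i, g⟫) ^ 2)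
        = exp (-k : ℝ) * exp (-k : ℝ) * (exp (-k : ℝ) * exp (-k : ℝ) * exp (-∑ i ∈ s, c ^ 2 * (a * ⟪u i, y₁ g - y₂ g⟫ - ⟪w i, g⟫) ^ 2)) := by
          simp only [← exp_add]; congr 1; ring
      _ ≤ exp (-k : ℝ) * exp (-k : ℝ) * ((1 - ε) ^ n * exp (-k : ℝ) * exp (-∑ i ∈ s, c ^ 2 * (a * ⟪u i, y₁ g - y₂ g⟫ - ⟪w i, g⟫) ^ 2)) := by
          gcongr
      _ ≤ _ := by gcongr
  have hZi : Integrable (fun g => ∑ i ∈ s, c ^ 2 * (a * ⟪u i, y₁ g - y₂ g⟫ - ⟪w i, g⟫) ^ 2) (γ 𝔼) :=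
    integrable_finsetSum _ fun i _ => (hTm i).integrable_sq.const_mul _
  have hjen : exp (-k : ℝ) ≤ ∫ g, exp (-∑ i ∈ s, c ^ 2 * (a * ⟪u i, y₁ g - y₂ g⟫ - ⟪w i, g⟫) ^ 2) ∂(γ 𝔼) := by
    refine exp_neg_le_integral hZi (fun g => by positivity) ?_
    rw [integral_finsetSum _ fun i _ => (hTm i).integrable_sq.const_mul _]
    calc ∑ i ∈ s, ∫ g, c ^ 2 * (a * ⟪u i, y₁ g - y₂ g⟫ - ⟪w i, g⟫) ^ 2 ∂(γ 𝔼) ≤ ∑ i ∈ s, (1 : ℝ) := by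
          refine Finset.sum_le_sum fun i _ => ?_
          rw [integral_const_mul]
          have h0 : 0 ≤ ∫ g, (a * ⟪u i, y₁ g - y₂ g⟫ - ⟪w i, g⟫) ^ 2 ∂(γ 𝔼) := integral_nonneg fun g => sq_nonneg _
          have h1 : c ^ 2 ≤ 1 := by nlinarith
          nlinarith [hT i]
      _ = k := by simp [hk]
  have hlower : exp (-(5 * k : ℝ)) ≤ ∫ g, ∫ p, Φ g p ∂ν ∂(γ 𝔼) := by
    calc exp (-(5 * k : ℝ)) = exp (-(4 * k : ℝ)) * exp (-k : ℝ) := by rw [← exp_add]; congr 1; ring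
      _ ≤ exp (-(4 * k : ℝ)) * ∫ g, exp (-∑ i ∈ s, c ^ 2 * (a * ⟪u i, y₁ g - y₂ g⟫ - ⟪w i, g⟫) ^ 2) ∂(γ 𝔼) := by gcongr
      _ = ∫ g, exp (-(4 * k : ℝ)) * exp (-∑ i ∈ s, c ^ 2 * (a * ⟪u i, y₁ g - y₂ g⟫ - ⟪w i, g⟫) ^ 2) ∂(γ 𝔼) := by
          rw [integral_const_mul]
      _ ≤ _ := integral_mono_of_nonneg (Filter.Eventually.of_forall fun g => by positivity) hΦi.integral_prod_left
          (Filter.Eventually.of_forall hlow)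
  have hupper : ∫ g, ∫ p, Φ g p ∂ν ∂(γ 𝔼) ≤ (1 / (c * σ)) ^ k := by
    rw [integral_integral_swap hΦi]
    have h1 : ∀ p, ∫ g, Φ g p ∂(γ 𝔼) ≤ (1 / (c * σ)) ^ k := by
      intro p
      refine le_trans (le_of_eq ?_) (gauss_small_ball w s (fun i => ⟪u i, p.2⟫ - ⟪u i, p.1⟫) hw hc0 hσ hwσ)
      congr 1; funext g
      simp only [Φ]
      congr 2
      refine Finset.sum_congr rfl fun i _ => by ring
    calc ∫ p, ∫ g, Φ g p ∂(γ 𝔼) ∂ν ≤ ∫ p, (1 / (c * σ)) ^ k ∂ν :=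
          integral_mono_of_nonneg (Filter.Eventually.of_forall fun p => integral_nonneg fun g => hΦ0 _ _)
            (integrable_const _) (Filter.Eventually.of_forall h1)
      _ = _ := by simp
  have hfin : exp (-5 : ℝ) ^ k ≤ (1 / (c * σ)) ^ k := by
    refine le_trans (le_of_eq ?_) (hlower.trans hupper)
    rw [← exp_nat_mul]; congr 1; ring
  have h5 : exp (-5 : ℝ) ≤ 1 / (c * σ) := le_of_pow_le_pow_left₀ hk0.ne' (by positivity) hfin
  rw [exp_neg, ← one_div, one_div_le_one_div (exp_pos _) (by positivity)] at h5
  rw [le_div_iff₀ hk']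
  have : c = k / (2 * n * a) := by rw [hc, hε]; field_simp
  rw [this, div_mul_eq_mul_div, div_le_iff₀ (by positivity)] at h5
  nlinarith

end Level

/-! ### Support function, selection, and the two `K`-valued maps -/

section Support

variable {n : ℕ} {K : Set (EuclideanSpace ℝ (Fin n))}

local notation "𝔼" => EuclideanSpace ℝ (Fin n)
local notation "γ" => ProbabilityTheory.stdGaussian

/-- The support function of `K` (for compact nonempty `K` the supremum is attained). -/
def suppFun (K : Set 𝔼) (u : 𝔼) : ℝ := sSup ((fun y => ⟪u, y⟫) '' K)

lemma suppFun_continuous (hK : IsCompact K) : Continuous (suppFun K) :=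
  hK.continuous_sSup (f := fun u y : 𝔼 => ⟪u, y⟫) (by
    simp only [Function.HasUncurry.uncurry, id]; fun_prop)

lemma le_suppFun (hK : IsCompact K) (u : 𝔼) {y : 𝔼} (hy : y ∈ K) : ⟪u, y⟫ ≤ suppFun K u :=
  le_csSup (hK.bddAbove_image (by fun_prop)) (Set.mem_image_of_mem _ hy)

lemma exists_suppFun (hK : IsCompact K) (h0 : K.Nonempty) (u : 𝔼) : ∃ y ∈ K, ⟪u, y⟫ = suppFun K u := by
  have h := (hK.image (f := fun y : 𝔼 => ⟪u, y⟫) (by fun_prop)).sSup_mem (h0.image _)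
  exact h

lemma suppFun_nonneg (hK : IsCompact K) (h0 : (0 : 𝔼) ∈ K) (u : 𝔼) : 0 ≤ suppFun K u := by
  simpa using le_suppFun hK u h0

lemma suppFun_smul {r : ℝ} (hr : 0 ≤ r) (u : 𝔼) : suppFun K (r • u) = r * suppFun K u := by
  rw [suppFun, suppFun, ← smul_eq_mul, ← Real.sSup_smul_of_nonneg hr, ← Set.image_smul, Set.image_image]
  simp_rw [real_inner_smul_left, smul_eq_mul]

lemma gauge_polar_le (hK : IsCompact K) (h0 : (0 : 𝔼) ∈ K) (u : 𝔼) :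
    gauge (polarBody K) u ≤ suppFun K u := by
  refine le_of_forall_pos_le_add fun ε hε => ?_
  have hs := suppFun_nonneg hK h0 u
  have hp : 0 < suppFun K u + ε := by linarith
  refine gauge_le_of_mem hp.le ?_
  rw [Set.mem_smul_set_iff_inv_smul_mem₀ hp.ne']
  intro y hy
  rw [real_inner_smul_left, inv_mul_le_iff₀ hp, mul_one]
  linarith [le_suppFun hK u hy]

/-- A measurable near-maximiser for the support function. -/
lemma exists_selection (hK : IsCompact K) (h0 : K.Nonempty) :
    ∃ x : 𝔼 → 𝔼, Measurable x ∧ (∀ g, x g ∈ K) ∧ ∀ g, suppFun K g - 1 ≤ ⟪g, x g⟫ := by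
  classical
  have : Nonempty K := h0.to_subtype
  let d : ℕ → K := TopologicalSpace.denseSeq K
  have hd : DenseRange d := TopologicalSpace.denseRange_denseSeq K
  have hex : ∀ g : 𝔼, ∃ k, suppFun K g - 1 ≤ ⟪g, (d k : 𝔼)⟫ := by
    intro g
    obtain ⟨y, hy, hyg⟩ := exists_suppFun hK h0 g
    have hopen : IsOpen {z : K | suppFun K g - 1 < ⟪g, (z : 𝔼)⟫} :=
      isOpen_lt continuous_const (by fun_prop)
    obtain ⟨k, hk⟩ := hd.exists_mem_open hopen ⟨⟨y, hy⟩, by simp [hyg]⟩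
    exact ⟨k, le_of_lt hk⟩
  refine ⟨fun g => d (Nat.find (hex g)), ?_, fun g => (d _).2, fun g => Nat.find_spec (hex g)⟩
  refine Measurable.find (f := fun k _ => (d k : 𝔼)) (p := fun k g => suppFun K g - 1 ≤ ⟪g, (d k : 𝔼)⟫)
    (fun k => measurable_const) (fun k => ?_) hex
  exact (isClosed_le ((suppFun_continuous hK).sub continuous_const) (by fun_prop)).measurableSet

/-- The vector-valued Ornstein-Uhlenbeck average. -/
def ouV (t : ℝ) (x : 𝔼 → 𝔼) (g : 𝔼) : 𝔼 := ∫ z, x (t • g + √(1 - t ^ 2) • z) ∂(γ 𝔼)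

lemma ouV_integrable (hK : IsCompact K) {x : 𝔼 → 𝔼} (hx : Measurable x) (hxK : ∀ g, x g ∈ K)
    (t : ℝ) (g : 𝔼) : Integrable (fun z => x (t • g + √(1 - t ^ 2) • z)) (γ 𝔼) := by
  obtain ⟨R, hR⟩ := hK.isBounded.exists_norm_le
  refine Integrable.of_bound (C := R) ?_ (Filter.Eventually.of_forall fun z => hR _ (hxK _))
  exact (hx.comp (by fun_prop)).aestronglyMeasurable

lemma ouV_mem (hK : IsConvexBody K) {x : 𝔼 → 𝔼} (hx : Measurable x) (hxK : ∀ g, x g ∈ K)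
    (t : ℝ) (g : 𝔼) : ouV t x g ∈ K :=
  hK.2.1.integral_mem hK.1.isClosed (Filter.Eventually.of_forall fun _ => hxK _)
    (ouV_integrable hK.1 hx hxK t g)

lemma inner_ouV (hK : IsConvexBody K) {x : 𝔼 → 𝔼} (hx : Measurable x) (hxK : ∀ g, x g ∈ K)
    (t : ℝ) (g u : 𝔼) : ⟪u, ouV t x g⟫ = ou t (fun z => ⟪u, x z⟫) g := by
  rw [ouV, ou, ← integral_inner (ouV_integrable hK.1 hx hxK t g)]

lemma inner_sel_memLp (hK : IsCompact K) {x : 𝔼 → 𝔼} (hx : Measurable x) (hxK : ∀ g, x g ∈ K) (u : 𝔼) :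
    MemLp (fun z => ⟪u, x z⟫) 2 (γ 𝔼) := by
  obtain ⟨R, hR⟩ := hK.isBounded.exists_norm_le
  refine MemLp.of_bound (C := ‖u‖ * R) ?_ (Filter.Eventually.of_forall fun z => ?_)
  · exact (measurable_const.inner hx).aestronglyMeasurable
  · exact (norm_inner_le_norm _ _).trans (mul_le_mul_of_nonneg_left (hR _ (hxK _)) (norm_nonneg _))

/-- The linear part of a `K`-valued map is, up to an `L²` error of size one in each direction, a
multiple of a difference of two `K`-valued maps. -/
lemma exists_pair (hn : 2 ≤ n) (hK : IsConvexBody K) (hI : IsIsotropicBody K)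
    {x : 𝔼 → 𝔼} (hx : Measurable x) (hxK : ∀ g, x g ∈ K) {M : ℕ} (hM : 1 ≤ M)
    (hMn : 24 * M * n ≤ 2 ^ M) :
    ∃ (a : ℝ) (y₁ y₂ : 𝔼 → 𝔼), 1 ≤ a ∧ a ≤ 4 * M ∧ (∀ g, y₁ g ∈ K) ∧ (∀ g, y₂ g ∈ K) ∧
      (∀ u, MemLp (fun g => a * ⟪u, y₁ g - y₂ g⟫ - ⟪gvec (fun z => ⟪u, x z⟫), g⟫) 2 (γ 𝔼)) ∧
      ∀ u, ‖u‖ = 1 →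
        ∫ g, (a * ⟪u, y₁ g - y₂ g⟫ - ⟪gvec (fun z => ⟪u, x z⟫), g⟫) ^ 2 ∂(γ 𝔼) ≤ 1 := by
  obtain ⟨N, t, ρ, ht, hq, hρ⟩ := exists_weights M hM
  have ht1 : ∀ j, |t j| ≤ 1 := fun j => (ht j).trans (by norm_num)
  have h0 : ∑ j, ρ j = 0 := by simpa using hq 0 (Nat.zero_le _)
  have h1 : ∑ j, ρ j * t j = 1 := by simpa using hq 1 hM
  set a : ℝ := ∑ j, max (ρ j) 0 with ha
  have ha' : a = ∑ j, max (-ρ j) 0 := by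
    rw [← sub_eq_zero, ha, ← Finset.sum_sub_distrib]
    refine Eq.trans ?_ h0
    refine Finset.sum_congr rfl fun j _ => ?_
    rcases le_total (ρ j) 0 with h | h
    · rw [max_eq_right h, max_eq_left (by linarith)]; ring
    · rw [max_eq_left h, max_eq_right (by linarith)]; ring
  have habs : ∑ j, |ρ j| = a + a := by
    nth_rewrite 2 [ha']
    rw [ha, ← Finset.sum_add_distrib]
    refine Finset.sum_congr rfl fun j _ => ?_
    rcases le_total (ρ j) 0 with h | h
    · rw [max_eq_right h, max_eq_left (by linarith), abs_of_nonpos h]; ring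
    · rw [max_eq_left h, max_eq_right (by linarith), abs_of_nonneg h]; ring
  have ha1 : 1 ≤ a := by
    have : (1 : ℝ) ≤ ∑ j, |ρ j| * (1 / 2) := by
      refine h1.symm.le.trans ?_
      refine Finset.sum_le_sum fun j _ => (le_abs_self _).trans ?_
      rw [abs_mul]
      exact mul_le_mul_of_nonneg_left (ht j) (abs_nonneg _)
    rw [← Finset.sum_mul, habs] at this
    linarith
  have ha0 : 0 < a := by linarith
  have key : ∀ u g, a * ⟪u, (∑ j, (max (ρ j) 0 / a) • ouV (t j) x g) -
      (∑ j, (max (-ρ j) 0 / a) • ouV (t j) x g)⟫ - ⟪gvec (fun z => ⟪u, x z⟫), g⟫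
        = ouErr t ρ (fun z => ⟪u, x z⟫) g := by
    intro u g
    rw [ouErr]
    congr 1
    rw [← Finset.sum_sub_distrib, inner_sum, Finset.mul_sum]
    refine Finset.sum_congr rfl fun j _ => ?_
    rw [← sub_smul, real_inner_smul_right, inner_ouV hK hx hxK, ← mul_assoc]
    congr 1
    rw [← sub_div, mul_div_cancel₀ _ ha0.ne']
    rcases le_total (ρ j) 0 with h | h
    · rw [max_eq_right h, max_eq_left (by linarith)]; ring
    · rw [max_eq_left h, max_eq_right (by linarith)]; ring
  refine ⟨a, fun g => ∑ j, (max (ρ j) 0 / a) • ouV (t j) x g,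
    fun g => ∑ j, (max (-ρ j) 0 / a) • ouV (t j) x g, ha1, by linarith, fun g => ?_, fun g => ?_, fun u => ?_, fun u hu => ?_⟩
  · refine hK.2.1.sum_mem (fun j _ => by positivity) ?_ fun j _ => ouV_mem hK hx hxK _ _
    rw [← Finset.sum_div, ← ha, div_self ha0.ne']
  · refine hK.2.1.sum_mem (fun j _ => by positivity) ?_ fun j _ => ouV_mem hK hx hxK _ _
    rw [← Finset.sum_div, ← ha', div_self ha0.ne']
  · simp_rw [key]
    exact ouErr_memLp ht1 (inner_sel_memLp hK.1 hx hxK u)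
  · simp_rw [key]
    have hF := inner_sel_memLp hK.1 hx hxK u
    have hη : ∀ m ≠ 1, |∑ j, ρ j * t j ^ m| ≤ 4 * M * (1 / 2) ^ M := by
      intro m hm
      rcases le_or_gt m M with h | h
      · rw [hq m h, if_neg hm, abs_zero]; positivity
      · calc |∑ j, ρ j * t j ^ m| ≤ ∑ j, |ρ j| * (1 / 2) ^ M := by
              refine (Finset.abs_sum_le_sum_abs _ _).trans (Finset.sum_le_sum fun j _ => ?_)
              rw [abs_mul, abs_pow]
              refine mul_le_mul_of_nonneg_left ?_ (abs_nonneg _)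
              calc |t j| ^ m ≤ (1 / 2) ^ m := by gcongr; exact ht j
                _ ≤ (1 / 2) ^ M := pow_le_pow_of_le_one (by norm_num) (by norm_num) h.le
          _ = (∑ j, |ρ j|) * (1 / 2) ^ M := by rw [Finset.sum_mul]
          _ ≤ 4 * M * (1 / 2) ^ M := by gcongr
    refine (ouErr_le ht1 h1 hη hF).trans ?_
    have hF2 : ∫ z, ⟪u, x z⟫ ^ 2 ∂(γ 𝔼) ≤ (3 * n) ^ 2 := by
      calc ∫ z, ⟪u, x z⟫ ^ 2 ∂(γ 𝔼) ≤ ∫ z, ((3 * n) ^ 2 : ℝ) ∂(γ 𝔼) := by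
            refine integral_mono hF.integrable_sq (integrable_const _) fun z => ?_
            refine sq_le_sq' ?_ ?_
            · have := neg_le_of_abs_le (abs_real_inner_le_norm u (x z))
              rw [hu, one_mul] at this
              linarith [isotropic_norm_le hn hK hI (hxK z)]
            · have := real_inner_le_norm u (x z)
              rw [hu, one_mul] at this
              linarith [isotropic_norm_le hn hK hI (hxK z)]
        _ = _ := by simp
    have hMn' : (24 : ℝ) * M * n ≤ 2 ^ M := by exact_mod_cast hMn
    have hz : (4 * M * (1 / 2) ^ M : ℝ) * (3 * n) * 2 ≤ 1 := by
      have e : (4 * M * (1 / 2) ^ M : ℝ) * (3 * n) * 2 = (24 * M * n) / 2 ^ M := by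
        rw [one_div, inv_pow]; field_simp; ring
      rw [e, div_le_one (by positivity)]
      exact hMn'
    calc 4 * (4 * M * (1 / 2) ^ M : ℝ) ^ 2 * ∫ z, ⟪u, x z⟫ ^ 2 ∂(γ 𝔼)
        ≤ 4 * (4 * M * (1 / 2) ^ M : ℝ) ^ 2 * (3 * n) ^ 2 := by gcongr
      _ = ((4 * M * (1 / 2) ^ M : ℝ) * (3 * n) * 2) ^ 2 := by ring
      _ ≤ 1 := pow_le_one₀ (by positivity) hz

end Support

/-! ### The Gaussian mean width -/

section GaussMean

variable {n : ℕ} {K : Set (EuclideanSpace ℝ (Fin n))}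

local notation "𝔼" => EuclideanSpace ℝ (Fin n)
local notation "γ" => ProbabilityTheory.stdGaussian

/-- The matrix `∫ x(g) ⊗ g dγ(g)`, as a linear map. -/
def crossMap (hK : IsCompact K) {x : 𝔼 → 𝔼} (hx : Measurable x) (hxK : ∀ g, x g ∈ K) : 𝔼 →ₗ[ℝ] 𝔼 where
  toFun u := gvec (fun z => ⟪u, x z⟫)
  map_add' u v := by
    simp only [gvec, inner_add_left, add_smul]
    exact integral_add (integrable_smul_id (inner_sel_memLp hK hx hxK u))
      (integrable_smul_id (inner_sel_memLp hK hx hxK v))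
  map_smul' r u := by
    simp only [gvec, real_inner_smul_left, mul_smul, RingHom.id_apply]
    exact integral_smul r _

/-- A linear map admits an orthonormal basis with pairwise orthogonal images of decreasing norms. -/
lemma exists_singular_basis (A : 𝔼 →ₗ[ℝ] 𝔼) : ∃ u : OrthonormalBasis (Fin n) ℝ 𝔼,
    (∀ i j, i ≠ j → ⟪A (u i), A (u j)⟫ = 0) ∧ Antitone fun i => ‖A (u i)‖ := by
  have hS := A.isSymmetric_adjoint_comp_self
  have hfin : Module.finrank ℝ 𝔼 = n := by simp
  have hip : ∀ i j, ⟪A (hS.eigenvectorBasis hfin i), A (hS.eigenvectorBasis hfin j)⟫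
      = hS.eigenvalues hfin j * ⟪hS.eigenvectorBasis hfin i, hS.eigenvectorBasis hfin j⟫ := by
    intro i j
    rw [← LinearMap.adjoint_inner_right, ← LinearMap.comp_apply, hS.apply_eigenvectorBasis hfin j]
    simp [real_inner_smul_right]
  refine ⟨hS.eigenvectorBasis hfin, fun i j hij => ?_, fun i j hij => ?_⟩
  · rw [hip, (hS.eigenvectorBasis hfin).inner_eq_zero hij, mul_zero]
  · have h : ∀ i, ‖A (hS.eigenvectorBasis hfin i)‖ ^ 2 = hS.eigenvalues hfin i := fun i => by
      rw [← real_inner_self_eq_norm_sq, hip, real_inner_self_eq_norm_sq, OrthonormalBasis.norm_eq_one]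
      ring
    refine (sq_le_sq₀ (norm_nonneg _) (norm_nonneg _)).1 ?_
    rw [h, h]
    exact hS.eigenvalues_antitone hfin hij

/-- Trace bound for the linear part of a `K`-valued selection. -/
lemma gauss_selection_bound (hn : 2 ≤ n) (hK : IsConvexBody K) (hI : IsIsotropicBody K)
    {x : 𝔼 → 𝔼} (hx : Measurable x) (hxK : ∀ g, x g ∈ K) {M : ℕ} (hM : 1 ≤ M)
    (hMn : 24 * M * n ≤ 2 ^ M) :
    ∫ g, ⟪g, x g⟫ ∂(γ 𝔼) ≤ 8 * exp 5 * n * M * (1 + log n) := by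
  obtain ⟨a, y₁, y₂, ha1, haM, hy₁, hy₂, hTm, hT⟩ := exists_pair hn hK hI hx hxK hM hMn
  set A := crossMap hK.1 hx hxK with hA
  have hAe : ∀ u, A u = gvec (fun z => ⟪u, x z⟫) := fun u => rfl
  obtain ⟨u, horth, hanti⟩ := exists_singular_basis A
  have hlev : ∀ i : Fin n, ‖A (u i)‖ ≤ 8 * exp 5 * n * M * ((i : ℝ) + 1)⁻¹ := by
    intro i
    rcases (norm_nonneg (A (u i))).eq_or_lt with h0 | h0
    · rw [← h0]; positivity
    have h := level_bound (by omega) hK hI (fun i => u i) (fun i => u.norm_eq_one i) (fun i => A (u i)) ha1 y₁ y₂ hy₁ hy₂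
      (fun i => hTm (u i)) (fun i => hT (u i) (u.norm_eq_one i)) (Finset.Iic i) ⟨i, by simp⟩
      (fun i _ j _ hij => horth i j hij) h0 (fun j hj => hanti (Finset.mem_Iic.1 hj))
    rw [Fin.card_Iic] at h
    refine h.trans ?_
    push_cast
    rw [div_eq_mul_inv]
    gcongr ?_ * _
    have : 0 ≤ 2 * exp 5 * n := by positivity
    nlinarith
  have htr : ∫ g, ⟪g, x g⟫ ∂(γ 𝔼) = ∑ i, ⟪A (u i), u i⟫ := by
    have h1 : ∀ g, ⟪g, x g⟫ = ∑ i, ⟪u i, x g⟫ * ⟪u i, g⟫ := by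
      intro g
      rw [← u.sum_inner_mul_inner g (x g)]
      refine Finset.sum_congr rfl fun i _ => ?_
      rw [mul_comm, real_inner_comm g]
    simp_rw [h1]
    rw [integral_finsetSum _ fun i _ => integrable_mul_of_memLp (inner_sel_memLp hK.1 hx hxK (u i)) (gauss_memLp_inner (u i))]
    refine Finset.sum_congr rfl fun i _ => ?_
    rw [hAe, inner_gvec (inner_sel_memLp hK.1 hx hxK (u i))]
  rw [htr]
  calc ∑ i, ⟪A (u i), u i⟫ ≤ ∑ i : Fin n, 8 * exp 5 * n * M * ((i : ℝ) + 1)⁻¹ := by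
        refine Finset.sum_le_sum fun i _ => (real_inner_le_norm _ _).trans ?_
        rw [u.norm_eq_one, mul_one]
        exact hlev i
    _ = 8 * exp 5 * n * M * ((harmonic n : ℚ) : ℝ) := by
        rw [← Finset.mul_sum, Fin.sum_univ_eq_sum_range (fun i => ((i : ℝ) + 1)⁻¹), harmonic]
        push_cast
        rfl
    _ ≤ _ := by
        gcongr
        exact harmonic_le_one_add_log n

lemma inner_sel_integrable (hK : IsCompact K) {x : 𝔼 → 𝔼} (hx : Measurable x) (hxK : ∀ g, x g ∈ K) :
    Integrable (fun g => ⟪g, x g⟫) (γ 𝔼) := by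
  obtain ⟨R, hR⟩ := hK.isBounded.exists_norm_le
  refine Integrable.mono' (g := fun g => ‖g‖ * R)
    ((gauss_memLp_id.integrable (by norm_num)).norm.mul_const R)
    (measurable_id.inner hx).aestronglyMeasurable (Filter.Eventually.of_forall fun g => ?_)
  exact (norm_inner_le_norm _ _).trans (mul_le_mul_of_nonneg_left (hR _ (hxK _)) (norm_nonneg _))

lemma suppFun_integrable (hK : IsCompact K) (h0 : K.Nonempty) : Integrable (suppFun K) (γ 𝔼) := by
  obtain ⟨R, hR⟩ := hK.isBounded.exists_norm_le
  refine Integrable.mono' (g := fun g => ‖g‖ * R)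
    ((gauss_memLp_id.integrable (by norm_num)).norm.mul_const R)
    (suppFun_continuous hK).aestronglyMeasurable (Filter.Eventually.of_forall fun g => ?_)
  obtain ⟨y, hy, h⟩ := exists_suppFun hK h0 g
  rw [← h]
  exact (norm_inner_le_norm _ _).trans (mul_le_mul_of_nonneg_left (hR _ hy) (norm_nonneg _))

/-- The degree `2⌈log₂ n⌉ + 8` is large enough for the truncation error. -/
lemma degree_ok (hn : 2 ≤ n) :
    24 * (2 * Nat.clog 2 n + 8) * n ≤ 2 ^ (2 * Nat.clog 2 n + 8) := by
  have h1 : n ≤ 2 ^ Nat.clog 2 n := Nat.le_pow_clog (by norm_num) n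
  have h2 : Nat.clog 2 n ≤ n := Nat.clog_le_of_le_pow (Nat.lt_two_pow_self).le
  rw [pow_add, mul_comm 2 (Nat.clog 2 n), pow_mul]
  generalize 2 ^ Nat.clog 2 n = q at *
  have h3 : n ^ 2 ≤ q ^ 2 := Nat.pow_le_pow_left h1 2
  nlinarith

lemma degree_le (hn : 2 ≤ n) : ((2 * Nat.clog 2 n + 8 : ℕ) : ℝ) ≤ 20 * log (n + 1) := by
  have hl2 := Real.log_two_gt_d9
  have hlog : log 2 ≤ log n := Real.log_le_log (by norm_num) (by exact_mod_cast hn)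
  have hlog1 : log n ≤ log (n + 1) := Real.log_le_log (by positivity) (by linarith)
  have h3 : 1 ≤ log (n + 1) := by
    rw [Real.le_log_iff_exp_le (by positivity)]
    have : (2 : ℝ) ≤ n := by exact_mod_cast hn
    linarith [Real.exp_one_lt_d9]
  have hc : (Nat.clog 2 n : ℝ) ≤ log n / log 2 + 1 := by
    have h := Nat.pow_pred_clog_lt_self (b := 2) (by norm_num) (show 1 < n by omega)
    have hp : 1 ≤ Nat.clog 2 n := Nat.clog_pos (by norm_num) hn
    have h' : (2 : ℝ) ^ (Nat.clog 2 n - 1) ≤ n := by exact_mod_cast h.le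
    have h'' := Real.log_le_log (by positivity) h'
    rw [Real.log_pow, Nat.cast_sub hp] at h''
    rw [← sub_le_iff_le_add, le_div_iff₀ (by linarith)]
    simpa using h''
  have hd : log n / log 2 ≤ 2 * log n := by
    rw [div_le_iff₀ (by linarith)]
    nlinarith
  push_cast
  linarith

lemma gauss_suppFun_le (hn : 2 ≤ n) (hK : IsConvexBody K) (hI : IsIsotropicBody K) :
    ∫ g, suppFun K g ∂(γ 𝔼) ≤ 321 * exp 5 * n * log (n + 1) ^ 2 := by
  have h0 : K.Nonempty := ⟨0, isotropic_zero_mem hK hI⟩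
  obtain ⟨x, hx, hxK, hsel⟩ := exists_selection hK.1 h0
  have h1 := gauss_selection_bound hn hK hI hx hxK (M := 2 * Nat.clog 2 n + 8) (by omega) (degree_ok hn)
  have h2 : ∫ g, suppFun K g ∂(γ 𝔼) ≤ ∫ g, (⟪g, x g⟫ + 1) ∂(γ 𝔼) :=
    integral_mono (suppFun_integrable hK.1 h0) ((inner_sel_integrable hK.1 hx hxK).add (integrable_const _))
      fun g => by linarith [hsel g]
  rw [integral_add (inner_sel_integrable hK.1 hx hxK) (integrable_const _)] at h2
  simp only [integral_const, probReal_univ, smul_eq_mul, one_mul] at h2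
  have hn2 : (2 : ℝ) ≤ n := by exact_mod_cast hn
  have hlog1 : log n ≤ log (n + 1) := Real.log_le_log (by positivity) (by linarith)
  have hlog0 : 0 ≤ log n := Real.log_nonneg (by linarith)
  have h3 : 1 ≤ log (n + 1) := by
    rw [Real.le_log_iff_exp_le (by positivity)]
    linarith [Real.exp_one_lt_d9]
  set l := log ((n : ℝ) + 1)
  have h4 : 8 * exp 5 * n * ((2 * Nat.clog 2 n + 8 : ℕ) : ℝ) * (1 + log n) ≤ 8 * exp 5 * n * (20 * l) * (2 * l) := by
    gcongr
    · exact degree_le hn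
    · linarith
  have he : 1 ≤ exp 5 := Real.one_le_exp (by norm_num)
  have h5 : 1 ≤ exp 5 * n * l ^ 2 := by
    have hl2 : 1 ≤ l ^ 2 := one_le_pow₀ h3
    have hn1 : (1 : ℝ) ≤ n := by linarith
    calc (1 : ℝ) = 1 * 1 * 1 := by norm_num
      _ ≤ exp 5 * n * l ^ 2 := by gcongr
  nlinarith

end GaussMean

/-! ### From Gaussian to spherical mean width -/

section Polar

variable {n : ℕ} {K : Set (EuclideanSpace ℝ (Fin n))}

local notation "𝔼" => EuclideanSpace ℝ (Fin n)
local notation "γ" => ProbabilityTheory.stdGaussian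

lemma gauss_density_integral (n : ℕ) (t : EuclideanSpace ℝ (Fin n)) :
    ∫ x : EuclideanSpace ℝ (Fin n), (((2 * π) ^ (-(n : ℝ) / 2) * exp (-‖x‖ ^ 2 / 2) : ℝ) : ℂ) *
      Complex.exp (⟪x, t⟫ * Complex.I) = Complex.exp (-‖t‖ ^ 2 / 2) := by
  have h := GaussianFourier.integral_cexp_neg_mul_sq_norm_add (V := EuclideanSpace ℝ (Fin n)) (b := 1 / 2)
    (by norm_num) Complex.I t
  have e : ∀ x : EuclideanSpace ℝ (Fin n), (((2 * π) ^ (-(n : ℝ) / 2) * exp (-‖x‖ ^ 2 / 2) : ℝ) : ℂ) *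
      Complex.exp (⟪x, t⟫ * Complex.I) = (((2 * π) ^ (-(n : ℝ) / 2) : ℝ) : ℂ) *
        Complex.exp (-(1 / 2) * ‖x‖ ^ 2 + Complex.I * ⟪t, x⟫) := by
    intro x
    rw [real_inner_comm t x]
    push_cast
    rw [mul_assoc, ← Complex.exp_add]
    congr 2
    ring
  simp_rw [e]
  rw [integral_const_mul, h, ← mul_assoc]
  have h1 : (((2 * π) ^ (-(n : ℝ) / 2) : ℝ) : ℂ) * ((π : ℂ) / (1 / 2)) ^ (Module.finrank ℝ (EuclideanSpace ℝ (Fin n)) / 2 : ℂ) = 1 := by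
    have h2 : ((π : ℂ) / (1 / 2)) ^ (Module.finrank ℝ (EuclideanSpace ℝ (Fin n)) / 2 : ℂ) = (((2 * π) ^ ((n : ℝ) / 2) : ℝ) : ℂ) := by
      rw [Complex.ofReal_cpow (by positivity)]
      congr 1
      · push_cast; ring
      · simp
    rw [h2, ← Complex.ofReal_mul, neg_div, Real.rpow_neg (by positivity), inv_mul_cancel₀ (by positivity)]
    simp
  rw [h1, one_mul, Complex.I_sq]
  congr 1
  ring

/-- The standard Gaussian measure of Mathlib has the usual density. -/
lemma gauss_eq_withDensity : (γ 𝔼) = stdGaussian n := by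
  have hmeas : Measurable fun x : 𝔼 => ENNReal.ofReal ((2 * π) ^ (-(n : ℝ) / 2) * exp (-‖x‖ ^ 2 / 2)) := by
    fun_prop
  have hint : Integrable fun x : 𝔼 => (2 * π) ^ (-(n : ℝ) / 2) * exp (-‖x‖ ^ 2 / 2) := by
    have h := (GaussianFourier.integrable_cexp_neg_mul_sq_norm_add (V := 𝔼) (b := 1 / 2)
      (by norm_num) 0 0).norm
    refine (h.congr (Filter.Eventually.of_forall fun x => ?_)).const_mul _
    simp only [Complex.norm_exp]
    congr 1
    simp [← Complex.ofReal_pow]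
    ring
  have hfin : IsFiniteMeasure (stdGaussian n) := by
    rw [stdGaussian]
    exact isFiniteMeasure_withDensity_ofReal hint.2
  refine Measure.ext_of_charFun (funext fun t => ?_)
  rw [ProbabilityTheory.charFun_stdGaussian, charFun_apply, stdGaussian,
    integral_withDensity_eq_integral_toReal_smul hmeas (Filter.Eventually.of_forall fun _ => ENNReal.ofReal_lt_top),
    ← gauss_density_integral]
  refine integral_congr_ae (Filter.Eventually.of_forall fun x => ?_)
  simp only
  rw [ENNReal.toReal_ofReal (by positivity), Complex.real_smul]

lemma gauss_integral_eq (f : 𝔼 → ℝ) :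
    ∫ x, f x ∂(γ 𝔼) = ∫ x : 𝔼, ((2 * π) ^ (-(n : ℝ) / 2) * exp (-‖x‖ ^ 2 / 2)) * f x := by
  rw [gauss_eq_withDensity, stdGaussian, integral_withDensity_eq_integral_toReal_smul (by fun_prop)
    (Filter.Eventually.of_forall fun _ => ENNReal.ofReal_lt_top)]
  refine integral_congr_ae (Filter.Eventually.of_forall fun x => ?_)
  simp only
  rw [ENNReal.toReal_ofReal (by positivity), smul_eq_mul]

/-- Polar integration of positively homogeneous functions; the constant does not depend on `f`. -/
lemma exists_polar_const (hn : 0 < n) : ∃ c : ℝ, ∀ f : 𝔼 → ℝ, (∀ r : ℝ, 0 ≤ r → ∀ x, f (r • x) = r * f x) →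
    ∫ x, f x ∂(γ 𝔼) = c * ∫ x : Metric.sphere (0 : 𝔼) 1, f x ∂(volume : Measure 𝔼).toSphere := by
  have : Nonempty (Fin n) := ⟨⟨0, hn⟩⟩
  refine ⟨∫ r : Set.Ioi (0 : ℝ), (2 * π) ^ (-(n : ℝ) / 2) * exp (-(r : ℝ) ^ 2 / 2) * r
    ∂(.volumeIoiPow (Module.finrank ℝ 𝔼 - 1)), fun f hf => ?_⟩
  have h1 : ∫ x : 𝔼, ((2 * π) ^ (-(n : ℝ) / 2) * exp (-‖x‖ ^ 2 / 2)) * f x =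
      ∫ x : ({(0)}ᶜ : Set 𝔼), ((2 * π) ^ (-(n : ℝ) / 2) * exp (-‖(x : 𝔼)‖ ^ 2 / 2)) * f x
        ∂((volume : Measure 𝔼).comap (↑)) := by
    rw [integral_subtype_comap (measurableSet_singleton _).compl
      (fun x : 𝔼 => ((2 * π) ^ (-(n : ℝ) / 2) * exp (-‖x‖ ^ 2 / 2)) * f x), restrict_compl_singleton]
  rw [gauss_integral_eq, h1, mul_comm (integral _ _), ← integral_prod_mul,
    ← (volume : Measure 𝔼).measurePreserving_homeomorphUnitSphereProd.integral_comp
        (Homeomorph.measurableEmbedding _)]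
  refine integral_congr_ae (Filter.Eventually.of_forall fun x => ?_)
  have hx : (x : 𝔼) ≠ 0 := x.2
  have hx' : ‖(x : 𝔼)‖ ≠ 0 := norm_ne_zero_iff.2 hx
  simp only [homeomorphUnitSphereProd_apply_snd_coe, homeomorphUnitSphereProd_apply_fst_coe]
  rw [hf _ (by positivity)]
  field_simp

lemma integral_abs_gaussianReal : 1 / 4 ≤ ∫ x, |x| ∂(ProbabilityTheory.gaussianReal 0 1) := by
  have h := gaussianReal_small_ball 0 (τ := 2) (by norm_num)
  have hi : Integrable (fun x : ℝ => exp (-(0 - 2 * x) ^ 2)) (ProbabilityTheory.gaussianReal 0 1) := by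
    refine Integrable.of_bound (C := 1) (Continuous.aestronglyMeasurable (by fun_prop)) (Filter.Eventually.of_forall fun x => ?_)
    rw [Real.norm_eq_abs, abs_of_pos (exp_pos _)]
    exact exp_le_one_iff.2 (by nlinarith [sq_nonneg (0 - 2 * x)])
  have habs : Integrable (fun x : ℝ => |x|) (ProbabilityTheory.gaussianReal 0 1) :=
    ((ProbabilityTheory.memLp_id_gaussianReal 2).integrable (by norm_num)).abs
  -- `1 - exp (-s²) ≤ min 1 s² ≤ |s|` with `s = 2 * x`
  have hle : ∫ x, (1 - exp (-(0 - 2 * x) ^ 2)) ∂(ProbabilityTheory.gaussianReal 0 1)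
      ≤ ∫ x, 2 * |x| ∂(ProbabilityTheory.gaussianReal 0 1) := by
    refine integral_mono ((integrable_const _).sub hi) (habs.const_mul 2) fun x => ?_
    simp only
    have h1 := add_one_le_exp (-(0 - 2 * x) ^ 2)
    have h2 := exp_pos (-(0 - 2 * x) ^ 2)
    have h3 := sq_abs x
    have h4 := abs_nonneg x
    rcases le_total (2 * |x|) 1 with h | h
    · nlinarith
    · linarith
  rw [integral_sub (integrable_const _) hi, integral_const_mul] at hle
  simp only [integral_const, probReal_univ, smul_eq_mul, one_mul] at hle
  linarith

lemma gauss_norm_lower (n : ℕ) : √n / 4 ≤ ∫ x, ‖x‖ ∂(γ (EuclideanSpace ℝ (Fin n))) := by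
  have hn1 : Integrable (fun x => ‖x‖) (γ (EuclideanSpace ℝ (Fin n))) :=
    (gauss_memLp_id.integrable (by norm_num)).norm
  have hc : ∀ i : Fin n, 1 / 4 ≤ ∫ x, |⟪EuclideanSpace.single i (1 : ℝ), x⟫| ∂(γ (EuclideanSpace ℝ (Fin n))) := by
    intro i
    have h := integral_abs_gaussianReal
    have hm := gauss_map_inner (EuclideanSpace.single i (1 : ℝ))
    simp only [PiLp.norm_single, norm_one, one_pow, Real.toNNReal_one] at hm
    rw [← hm, integral_map (Measurable.aemeasurable (by fun_prop)) (Continuous.aestronglyMeasurable (by fun_prop))] at h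
    exact h
  have hi : ∀ i : Fin n, Integrable (fun x => |⟪EuclideanSpace.single i (1 : ℝ), x⟫|) (γ (EuclideanSpace ℝ (Fin n))) :=
    fun i => ((gauss_memLp_inner _).integrable (by norm_num)).abs
  have hs : (n : ℝ) / 4 ≤ √n * ∫ x, ‖x‖ ∂(γ (EuclideanSpace ℝ (Fin n))) := by
    calc (n : ℝ) / 4 = ∑ _i : Fin n, (1 / 4 : ℝ) := by simp; ring
      _ ≤ ∑ i : Fin n, ∫ x, |⟪EuclideanSpace.single i (1 : ℝ), x⟫| ∂(γ (EuclideanSpace ℝ (Fin n))) :=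
          Finset.sum_le_sum fun i _ => hc i
      _ = ∫ x, ∑ i : Fin n, |⟪EuclideanSpace.single i (1 : ℝ), x⟫| ∂(γ (EuclideanSpace ℝ (Fin n))) :=
          (integral_finsetSum _ fun i _ => hi i).symm
      _ ≤ ∫ x, √n * ‖x‖ ∂(γ (EuclideanSpace ℝ (Fin n))) := by
          refine integral_mono (integrable_finsetSum _ fun i _ => hi i) (hn1.const_mul _) fun x => ?_
          simp only
          refine le_of_sq_le_sq ?_ (by positivity)
          rw [mul_pow, Real.sq_sqrt (Nat.cast_nonneg n), EuclideanSpace.norm_sq_eq]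
          have := sq_sum_le_card_mul_sum_sq (s := (Finset.univ : Finset (Fin n)))
            (f := fun i => |⟪EuclideanSpace.single i (1 : ℝ), x⟫|)
          simpa [EuclideanSpace.inner_single_left] using this
      _ = _ := integral_const_mul _ _
  rcases Nat.eq_zero_or_pos n with h0 | h0
  · subst h0
    simpa using integral_nonneg fun x : EuclideanSpace ℝ (Fin 0) => norm_nonneg x
  · have hp : 0 < √(n : ℝ) := Real.sqrt_pos.2 (by exact_mod_cast h0)
    refine le_of_mul_le_mul_left ?_ hp
    rw [← mul_div_assoc, Real.mul_self_sqrt (Nat.cast_nonneg n)]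
    exact hs

/-- The spherical mean width is controlled by the Gaussian mean width. -/
lemma Mparam_polar_le (hn : 2 ≤ n) (hK : IsConvexBody K) (hI : IsIsotropicBody K) :
    Mparam n (polarBody K) * (√n / 4) ≤ ∫ g, suppFun K g ∂(γ 𝔼) := by
  have : Nonempty (Fin n) := ⟨⟨0, by omega⟩⟩
  have h0 := isotropic_zero_mem hK hI
  obtain ⟨c, hc⟩ := exists_polar_const (n := n) (by omega)
  set σ := (volume : Measure 𝔼).toSphere with hσ
  have h1 := hc (suppFun K) fun r hr x => suppFun_smul hr x
  have h2 := hc (fun x => ‖x‖) fun r hr x => by rw [norm_smul, Real.norm_of_nonneg hr]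
  have h3 : ∫ x : Metric.sphere (0 : 𝔼) 1, ‖(x : 𝔼)‖ ∂σ = σ.real Set.univ := by simp
  rw [h3] at h2
  have hσpos : 0 < σ.real Set.univ := by
    rw [hσ, Measure.toSphere_real_apply_univ]
    have : 0 < (volume : Measure 𝔼).real (Metric.ball 0 1) :=
      ENNReal.toReal_pos (Metric.measure_ball_pos _ _ one_pos).ne' measure_ball_lt_top.ne
    have : 0 < Module.finrank ℝ 𝔼 := by simp; omega
    positivity
  have hnorm := gauss_norm_lower n
  have hsupp0 : 0 ≤ ∫ x : Metric.sphere (0 : 𝔼) 1, suppFun K x ∂σ :=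
    integral_nonneg fun x => suppFun_nonneg hK.1 h0 _
  have hM : Mparam n (polarBody K) ≤ (σ.real Set.univ)⁻¹ * ∫ x : Metric.sphere (0 : 𝔼) 1, suppFun K x ∂σ := by
    rw [Mparam, integral_smul_measure, ENNReal.toReal_inv, smul_eq_mul]
    refine mul_le_mul_of_nonneg_left ?_ (by positivity)
    refine integral_mono_of_nonneg (Filter.Eventually.of_forall fun x => gauge_nonneg _) ?_
      (Filter.Eventually.of_forall fun x => gauge_polar_le hK.1 h0 _)
    exact ((suppFun_continuous hK.1).comp continuous_subtype_val).integrable_of_hasCompactSupport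
      (HasCompactSupport.of_compactSpace _)
  calc Mparam n (polarBody K) * (√n / 4)
      ≤ ((σ.real Set.univ)⁻¹ * ∫ x : Metric.sphere (0 : 𝔼) 1, suppFun K x ∂σ) * (c * σ.real Set.univ) := by
        rw [← h2]
        exact mul_le_mul hM hnorm (by positivity) (by positivity)
    _ = _ := by rw [h1]; field_simp

end Polar

/-- For a convex body in isotropic position, `M*(K) ≤ C log²(n+1) √n` (E. Milman's bound). -/
theorem Mstar_bound_isotropic :
    ∃ C : ℝ, 0 < C ∧
      ∀ n : ℕ, 2 ≤ n → ∀ K : Set (EuclideanSpace ℝ (Fin n)),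
        IsConvexBody K → IsIsotropicBody K →
        Mparam n (polarBody K) ≤ C * Real.log (n + 1) ^ 2 * Real.sqrt n := by
  refine ⟨1284 * exp 5, by positivity, fun n hn K hK hI => ?_⟩
  have h := (Mparam_polar_le hn hK hI).trans (gauss_suppFun_le hn hK hI)
  have hp : 0 < √(n : ℝ) := Real.sqrt_pos.2 (by positivity)
  have hsq : √(n : ℝ) * √n = n := Real.mul_self_sqrt (Nat.cast_nonneg n)
  refine le_of_mul_le_mul_right (h.trans (le_of_eq ?_)) (by positivity : 0 < √(n : ℝ) / 4)
  linear_combination (-(321 * exp 5 * log ((n : ℝ) + 1) ^ 2)) * hsq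

end
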